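/- arXiv:2304.13695 — 8 statements merged into one kernel-verified Lean document; each statement's English description precedes it below -/
import Mathlib

section
/- Let ℱ = {F₁,…,F_m} be a finite set of graphs, let ℓ be the maximum number of connected components of a graph in ℱ, and let c be the maximum number of vertices in a connected component of a graph in ℱ. Set α_ℱ = m·ℓ·c². Then for every finite simple graph G there exists ℱ' ∈ Conn(ℱ) such that opt(G,ℱ') ≤ opt(G,ℱ) + α_ℱ. -/
/-- `G` contains a subgraph isomorphic to `F` avoiding the vertex set `S`:
there is an injective map of the vertices of `F` into `V(G) \ S` carrying
edges of `F` to edges of `G`. -/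
def HasSubCopyAvoiding {α β : Type} (G : SimpleGraph α) (F : SimpleGraph β)
    (S : Finset α) : Prop :=
  ∃ f : β ↪ α, (∀ x, f x ∉ S) ∧ ∀ u v, F.Adj u v → G.Adj (f u) (f v)

/-- `S` is a solution for Subgraph Hitting on `(G, ℱ)`: after deleting `S`, the
graph `G` contains no subgraph isomorphic to a member of the family `F`. -/
def IsSubHitting {α ι : Type} {β : ι → Type} (G : SimpleGraph α)
    (F : ∀ i, SimpleGraph (β i)) (S : Finset α) : Prop :=
  ∀ i, ¬ HasSubCopyAvoiding G (F i) S

/-- `opt(G, ℱ)`: the minimum size of a solution for Subgraph Hitting on `(G, ℱ)`. -/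
noncomputable def optSub {α ι : Type} {β : ι → Type} (G : SimpleGraph α)
    (F : ∀ i, SimpleGraph (β i)) : ℕ :=
  sInf {n | ∃ S : Finset α, IsSubHitting G F S ∧ S.card = n}

/-!
Fix a minimum solution `S` for `ℱ`. For each `F ∈ ℱ`, pack a maximal set of components of `F`
disjointly into `G - S`. It misses some component `K`, as otherwise `F` itself would embed in
`G - S`, and by maximality the at most `|V(F)|` vertices used by the packing meet every copy of `K`
in `G - S`. Adding these vertices to `S` for every `F` gives a solution for the chosen components,
and `|V(F)| ≤ ℓ * c`.
-/

section GraphLemmas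

open SimpleGraph

variable {β : Type*} {F : SimpleGraph β}

theorem induce_union_isContained_sum {A B : Set β} (hdisj : Disjoint A B)
    (hadj : ∀ a ∈ A, ∀ b ∈ B, ¬ F.Adj a b) :
    F.induce (A ∪ B) ⊑ F.induce A ⊕g F.induce B := by
  classical
  let e : F.induce A ⊕g F.induce B ≃g F.induce (A ∪ B) :=
    { toEquiv := (Equiv.Set.union hdisj).symm
      map_rel_iff' := by
        rintro (⟨u, hu⟩ | ⟨u, hu⟩) (⟨v, hv⟩ | ⟨v, hv⟩)
        · rfl
        · exact iff_of_false (hadj u hu v hv) Bool.false_ne_true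
        · exact iff_of_false (fun huv => hadj v hv u hu huv.symm) Bool.false_ne_true
        · rfl }
  exact ⟨e.symm.toCopy⟩

theorem induce_preimage_insert_isContained_sum {T : Set F.ConnectedComponent}
    {K : F.ConnectedComponent} (hK : K ∉ T) :
    F.induce (F.connectedComponentMk ⁻¹' insert K T) ⊑
      F.induce (F.connectedComponentMk ⁻¹' T) ⊕g F.induce K.supp := by
  have hpre : F.connectedComponentMk ⁻¹' insert K T = F.connectedComponentMk ⁻¹' T ∪ K.supp := by
    rw [Set.insert_eq, Set.union_comm]
    rfl
  rw [hpre]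
  refine induce_union_isContained_sum (Set.disjoint_left.2 fun v hT hv => hK (hv ▸ hT)) ?_
  intro a ha b hb hab
  exact hK (hb ▸ ConnectedComponent.sound hab.reachable ▸ ha)

theorem card_le_card_connectedComponent_mul [Fintype β] {c : ℕ}
    (hc : ∀ K : F.ConnectedComponent, K.supp.ncard ≤ c) :
    Fintype.card β ≤ Nat.card F.ConnectedComponent * c := by
  classical
  have := Fintype.ofFinite F.ConnectedComponent
  rw [Nat.card_eq_fintype_card, mul_comm]
  refine Finset.card_le_mul_card_image_of_maps_to
    (f := F.connectedComponentMk) (fun v _ => Finset.mem_univ _) c fun K _ => ?_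
  simpa only [Set.ncard_eq_toFinset_card', ConnectedComponent.supp, Set.toFinset_ofPred] using hc K

end GraphLemmas

namespace HasSubCopyAvoiding

open scoped SimpleGraph

variable {α β γ : Type} {G : SimpleGraph α} {F : SimpleGraph β} {H : SimpleGraph γ} {S T : Finset α}

theorem of_isEmpty [IsEmpty β] : HasSubCopyAvoiding G F S :=
  ⟨.ofIsEmpty, isEmptyElim, isEmptyElim⟩

theorem anti (hST : S ⊆ T) : HasSubCopyAvoiding G F T → HasSubCopyAvoiding G F S
  | ⟨f, hf, hadj⟩ => ⟨f, fun x hx => hf x (hST hx), hadj⟩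

theorem of_isContained (h : HasSubCopyAvoiding G F S) : H ⊑ F → HasSubCopyAvoiding G H S := by
  obtain ⟨f, hf, hadj⟩ := h
  rintro ⟨e⟩
  exact ⟨e.toEmbedding.trans f, fun x => hf (e x), fun u v huv => hadj _ _ (e.toHom.map_adj huv)⟩

theorem exists_forall_sum [Fintype β] [DecidableEq α] (h : HasSubCopyAvoiding G F S) :
    ∃ X : Finset α, X.card = Fintype.card β ∧
      ∀ {γ : Type} {H : SimpleGraph γ}, HasSubCopyAvoiding G H (S ∪ X) →
        HasSubCopyAvoiding G (F ⊕g H) S := by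
  obtain ⟨f, hf, hfadj⟩ := h
  refine ⟨Finset.univ.map f, Finset.card_map f, fun {γ H} ⟨g, hg, hgadj⟩ => ?_⟩
  simp only [Finset.mem_union, Finset.mem_map, Finset.mem_univ, true_and, not_or, not_exists] at hg
  have hinj : Function.Injective (Sum.elim f g) :=
    f.injective.sumElim g.injective fun b c => (hg c).2 b
  refine ⟨⟨Sum.elim f g, hinj⟩, Sum.rec hf fun c => (hg c).1, ?_⟩
  rintro (u | u) (v | v) huv
  · exact hfadj u v huv
  · cases huv
  · cases huv
  · exact hgadj u v huv

end HasSubCopyAvoiding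

theorem exists_connectedComponent_not_hasSubCopyAvoiding {α β : Type} [Fintype β] [DecidableEq α]
    {G : SimpleGraph α} {F : SimpleGraph β} {S : Finset α} (hS : ¬ HasSubCopyAvoiding G F S) :
    ∃ (K : F.ConnectedComponent) (X : Finset α), X.card ≤ Fintype.card β ∧
      ¬ HasSubCopyAvoiding G (F.induce K.supp) (S ∪ X) := by
  classical
  let Packed (T : Set F.ConnectedComponent) : Prop :=
    HasSubCopyAvoiding G (F.induce (F.connectedComponentMk ⁻¹' T)) S
  have hempty : Packed ∅ := by
    have : IsEmpty (F.connectedComponentMk ⁻¹' ∅) := Set.isEmpty_coe_sort.2 Set.preimage_empty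
    exact .of_isEmpty
  obtain ⟨T, hT⟩ : ∃ T, Maximal Packed T :=
    (Set.toFinite {T | Packed T}).exists_maximal ⟨∅, hempty⟩
  have hne : T ≠ Set.univ := by
    rintro rfl
    exact hS (hT.prop.of_isContained ⟨(SimpleGraph.induceUnivIso F).symm.toCopy⟩)
  obtain ⟨K, hK⟩ := (Set.ne_univ_iff_exists_notMem T).1 hne
  obtain ⟨X, hX, hsum⟩ := hT.prop.exists_forall_sum
  refine ⟨K, X, hX.trans_le (Fintype.card_subtype_le _), fun hKX => ?_⟩
  have hinsert : Packed (insert K T) :=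
    (hsum hKX).of_isContained (induce_preimage_insert_isContained_sum hK)
  exact hK (hT.le_of_ge hinsert (Set.subset_insert K T) (Set.mem_insert K T))

section SubHitting

variable {α ι : Type} {β : ι → Type} {G : SimpleGraph α} {F : ∀ i, SimpleGraph (β i)}
  {S : Finset α}

theorem isSubHitting_univ [Fintype α] [∀ i, Nonempty (β i)] :
    IsSubHitting G F Finset.univ := by
  rintro i ⟨f, hf, -⟩
  exact hf (Classical.arbitrary _) (Finset.mem_univ _)

theorem IsSubHitting.optSub_le_card (hS : IsSubHitting G F S) : optSub G F ≤ S.card :=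
  Nat.sInf_le ⟨S, hS, rfl⟩

theorem IsSubHitting.exists_card_eq_optSub (hS : IsSubHitting G F S) :
    ∃ T : Finset α, IsSubHitting G F T ∧ T.card = optSub G F :=
  Nat.sInf_mem (s := {n | ∃ T : Finset α, IsSubHitting G F T ∧ T.card = n}) ⟨_, S, hS, rfl⟩

theorem IsSubHitting.exists_isSubHitting_connectedComponents [Fintype ι] [∀ i, Fintype (β i)]
    (hS : IsSubHitting G F S) :
    ∃ (comp : ∀ i, (F i).ConnectedComponent) (T : Finset α),
      IsSubHitting G (fun i => (F i).induce (comp i).supp) T ∧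
        T.card ≤ S.card + ∑ i, Fintype.card (β i) := by
  classical
  choose comp X hX hcomp using fun i => exists_connectedComponent_not_hasSubCopyAvoiding (hS i)
  refine ⟨comp, S ∪ Finset.univ.biUnion X, fun i hi => hcomp i (hi.anti ?_), ?_⟩
  · exact Finset.union_subset_union_right (Finset.subset_biUnion_of_mem X (Finset.mem_univ i))
  · calc (S ∪ Finset.univ.biUnion X).card
      _ ≤ S.card + (Finset.univ.biUnion X).card := Finset.card_union_le _ _
      _ ≤ S.card + ∑ i, (X i).card := by gcongr; exact Finset.card_biUnion_le
      _ ≤ S.card + ∑ i, Fintype.card (β i) := by gcongr with i; exact hX i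

theorem sum_card_le_card_mul_mul_sq [Fintype ι] [∀ i, Fintype (β i)] {ℓ c : ℕ}
    (hℓ : ∀ i, Nat.card (F i).ConnectedComponent ≤ ℓ)
    (hc : ∀ i, ∀ K : (F i).ConnectedComponent, K.supp.ncard ≤ c) :
    ∑ i, Fintype.card (β i) ≤ Fintype.card ι * ℓ * c ^ 2 :=
  calc ∑ i, Fintype.card (β i)
    _ ≤ ∑ _i : ι, ℓ * c := Finset.sum_le_sum fun i _ =>
      (card_le_card_connectedComponent_mul (hc i)).trans (Nat.mul_le_mul_right c (hℓ i))
    _ = Fintype.card ι * ℓ * c := by simp [mul_assoc]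
    _ ≤ Fintype.card ι * ℓ * c ^ 2 := by gcongr; exact Nat.le_self_pow two_ne_zero c

end SubHitting

theorem stmt0_general {ι : Type} [Fintype ι] {β : ι → Type} [∀ i, Fintype (β i)]
    (F : ∀ i, SimpleGraph (β i)) {α : Type} (G : SimpleGraph α)
    (hG : ∃ S : Finset α, IsSubHitting G F S) :
    ∃ comp : ∀ i, (F i).ConnectedComponent,
      optSub G (fun i => (F i).induce (comp i).supp) ≤
        optSub G F + ∑ i, Fintype.card (β i) := by
  obtain ⟨S₀, hS₀⟩ := hG
  obtain ⟨S, hS, hScard⟩ := hS₀.exists_card_eq_optSub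
  obtain ⟨comp, T, hT, hTcard⟩ := hS.exists_isSubHitting_connectedComponents
  exact ⟨comp, hT.optSub_le_card.trans (hScard ▸ hTcard)⟩

/-- if `ℓ` bounds the number of connected components of every `F ∈ ℱ`
and `c` bounds the number of vertices of every connected component of every `F ∈ ℱ`,
then for every finite graph `G` there is a choice `comp` of one connected component of
each graph of `ℱ` (i.e. a member `ℱ' ∈ Conn(ℱ)`) such that
`opt(G, ℱ') ≤ opt(G, ℱ) + m·ℓ·c²`. -/
theorem stmt0 {ι : Type} [Fintype ι] {β : ι → Type} [∀ i, Fintype (β i)]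
    [∀ i, Nonempty (β i)]
    (F : ∀ i, SimpleGraph (β i)) (ℓ c : ℕ)
    (hℓ : ∀ i, Nat.card (F i).ConnectedComponent ≤ ℓ)
    (hc : ∀ i, ∀ K : (F i).ConnectedComponent, K.supp.ncard ≤ c)
    {α : Type} [Fintype α] (G : SimpleGraph α) :
    ∃ comp : ∀ i, (F i).ConnectedComponent,
      optSub G (fun i => (F i).induce (comp i).supp) ≤
        optSub G F + Fintype.card ι * ℓ * c ^ 2 := by
  obtain ⟨comp, hcomp⟩ := stmt0_general F G ⟨Finset.univ, isSubHitting_univ⟩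
  exact ⟨comp, hcomp.trans (Nat.add_le_add_left (sum_card_le_card_mul_mul_sq hℓ hc) _)⟩
end

section
/- Let ℱ = {F₁,…,F_m} be a finite set of graphs, let ℓ be the maximum number of connected components of a graph in ℱ, and let c be the maximum number of vertices in a connected component of a graph in ℱ. Let d ≥ 1 and set α*_ℱ = m·ℓ²·c³·d. Then for every finite simple graph G of degeneracy at most d there exists ℱ' ∈ Conn(ℱ) such that opt*(G,ℱ') ≤ opt*(G,ℱ) + α*_ℱ. -/
/-- `G` contains an induced subgraph isomorphic to `F` avoiding the vertex set `S`:
there is an injective map of the vertices of `F` into `V(G) \ S` such that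
two vertices of `F` are adjacent iff their images are adjacent in `G`. -/
def HasIndCopyAvoiding {α β : Type} (G : SimpleGraph α) (F : SimpleGraph β)
    (S : Finset α) : Prop :=
  ∃ f : β ↪ α, (∀ x, f x ∉ S) ∧ ∀ u v, F.Adj u v ↔ G.Adj (f u) (f v)

/-- `S` is a solution for Induced Subgraph Hitting on `(G, ℱ)`. -/
def IsIndHitting {α ι : Type} {β : ι → Type} (G : SimpleGraph α)
    (F : ∀ i, SimpleGraph (β i)) (S : Finset α) : Prop :=
  ∀ i, ¬ HasIndCopyAvoiding G (F i) S

/-- `opt*(G, ℱ)`: minimum size of a solution for Induced Subgraph Hitting on `(G, ℱ)`. -/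
noncomputable def optInd {α ι : Type} {β : ι → Type} (G : SimpleGraph α)
    (F : ∀ i, SimpleGraph (β i)) : ℕ :=
  sInf {n | ∃ S : Finset α, IsIndHitting G F S ∧ S.card = n}

/-- `G` has degeneracy at most `d`: every subgraph with at least one vertex has a
vertex of degree at most `d`. -/
def DegeneracyLE {α : Type} (G : SimpleGraph α) (d : ℕ) : Prop :=
  ∀ H : G.Subgraph, H.verts.Nonempty → ∃ v ∈ H.verts, (H.neighborSet v).ncard ≤ d

/-!
Fix an optimal solution `S` for `ℱ` and a graph `F ∈ ℱ` on `n` vertices. If no component `K` of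
`F` had its induced copies in `G - S` hit by `d * n ^ 2` further vertices, then greedily `G - S`
would contain `d * n` copies of each component, all vertex-disjoint. The copies span at most
`d * n * (d * n)` vertices, hence by degeneracy fewer than `(d * n) ^ 2` edges. So some choice of
one copy per component has no edge between different copies, by averaging over all choices, and
these copies together form an induced copy of `F` avoiding `S`, a contradiction. Thus each graph
of `ℱ` costs at most `d * n ^ 2 ≤ ℓ ^ 2 * c ^ 2 * d` extra vertices.
-/

open Finset Function

section Degeneracy

variable {α β : Type} {G : SimpleGraph α} {d : ℕ}

theorem DegeneracyLE.comap (hG : DegeneracyLE G d) (f : β ↪ α) :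
    DegeneracyLE (G.comap f) d := by
  intro H hH
  let φ : G.comap f →g G := ⟨f, id⟩
  obtain ⟨_, ⟨v, hv, rfl⟩, hdeg⟩ := hG (H.map φ) (hH.image φ)
  have hneighbors : (H.map φ).neighborSet (φ v) = f '' H.neighborSet v := by
    ext w
    constructor
    · rintro ⟨v', w', hadj, hv', rfl⟩
      obtain rfl := f.injective hv'
      exact ⟨w', hadj, rfl⟩
    · rintro ⟨w', hadj, rfl⟩
      exact ⟨v, w', hadj, rfl, rfl⟩
  rw [hneighbors, Set.ncard_image_of_injective _ f.injective] at hdeg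
  exact ⟨v, hv, hdeg⟩

theorem DegeneracyLE.exists_degree_le [Fintype α] [Nonempty α] [DecidableRel G.Adj]
    (hG : DegeneracyLE G d) : ∃ v, G.degree v ≤ d := by
  obtain ⟨v, -, hv⟩ := hG ⊤ Set.univ_nonempty
  refine ⟨v, ?_⟩
  rwa [SimpleGraph.Subgraph.neighborSet_top, ← Nat.card_coe_set_eq, Nat.card_eq_fintype_card,
    SimpleGraph.card_neighborSet_eq_degree] at hv

theorem DegeneracyLE.card_edgeFinset_le [Fintype α] [DecidableRel G.Adj] (hG : DegeneracyLE G d) :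
    #G.edgeFinset ≤ d * (Fintype.card α - 1) := by
  classical
  generalize hn : Fintype.card α = n
  induction n generalizing α with
  | zero =>
    have := Fintype.card_eq_zero_iff.1 hn
    simp [Subsingleton.elim G ⊥]
  | succ n ih =>
    have : Nonempty α := Fintype.card_pos_iff.1 (hn ▸ n.succ_pos)
    obtain ⟨v, hv⟩ := hG.exists_degree_le
    have hvn : G.degree v ≤ n := Nat.le_of_lt_succ ((G.degree_lt_card_verts v).trans_eq hn)
    have hcard : Fintype.card ({v}ᶜ : Set α) = n := by
      rw [Fintype.card_compl_set, hn, Set.card_singleton, Nat.add_sub_cancel]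
    have hrest : #(G.induce {v}ᶜ).edgeFinset ≤ d * (n - 1) := ih (hG.comap (.subtype _)) hcard
    have hedges : #(G.induce {v}ᶜ).edgeFinset = #G.edgeFinset - G.degree v := by
      rw [G.card_edgeFinset_induce_compl_singleton, G.card_edgeFinset_deleteIncidenceSet]
    cases n with
    | zero => omega
    | succ n =>
      simp only [Nat.add_sub_cancel, Nat.mul_succ] at hrest ⊢
      omega

end Degeneracy

section Selection

variable {J K : Type*} [Fintype K]

theorem card_sq_mul_card_filter_apply_eq_and_apply_eq [Fintype J] [DecidableEq J]
    [DecidableEq K] {i j : J} (hij : i ≠ j) (a b : K) :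
    Fintype.card K ^ 2 * #{s : J → K | s i = a ∧ s j = b} =
      Fintype.card K ^ Fintype.card J := by
  let t (k : J) : Finset K := if k = i then {a} else if k = j then {b} else univ
  have hfilter : ({s : J → K | s i = a ∧ s j = b} : Finset (J → K)) = Fintype.piFinset t := by
    ext s
    simp only [mem_filter, mem_univ, true_and, Fintype.mem_piFinset, t]
    refine ⟨?_, fun h => ⟨by simpa using h i, by simpa [hij.symm] using h j⟩⟩
    rintro ⟨rfl, rfl⟩ k
    split_ifs with hi hj <;> simp [*]
  have hfactor (k : J) : (if k = i then Fintype.card K else 1) *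
      (if k = j then Fintype.card K else 1) * #(t k) = Fintype.card K := by
    by_cases hi : k = i <;> by_cases hj : k = j <;> simp_all [t]
  calc Fintype.card K ^ 2 * #{s : J → K | s i = a ∧ s j = b}
      = ∏ k, (if k = i then Fintype.card K else 1) *
          (if k = j then Fintype.card K else 1) * #(t k) := by
        rw [hfilter, Fintype.card_piFinset, prod_mul_distrib, prod_mul_distrib,
          prod_ite_eq' univ i, prod_ite_eq' univ j, if_pos (mem_univ i), if_pos (mem_univ j), sq]
    _ = Fintype.card K ^ Fintype.card J := by
        simp only [hfactor, prod_const, card_univ]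

/-- A uniformly random `s` selects both ends of a given edge between distinct classes with
probability `1 / |K| ^ 2`, so fewer than `|K| ^ 2` edges leave some `s` selecting none. -/
theorem exists_selection_of_card_edgeFinset_lt [Finite J] {W : Type*} (H : SimpleGraph W)
    [Fintype H.edgeSet] (cls : W → J) (idx : W → K)
    (hH : #H.edgeFinset < Fintype.card K ^ 2) :
    ∃ s : J → K, ∀ x y, H.Adj x y → s (cls x) = idx x → s (cls y) = idx y → cls x = cls y := by
  classical
  have := Fintype.ofFinite J
  by_contra! hbad
  let crossing : Finset (Sym2 W) := {e ∈ H.edgeFinset | ¬ (e.map cls).IsDiag}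
  let hits (e : Sym2 W) : Finset (J → K) := {s | ∀ x ∈ e, s (cls x) = idx x}
  have hcover : univ ⊆ crossing.biUnion hits := by
    intro s _
    obtain ⟨x, y, hadj, hx, hy, hne⟩ := hbad s
    exact mem_biUnion.2 ⟨s(x, y), by simp [crossing, hadj, hne], by simp [hits, hx, hy]⟩
  have hhits : ∀ e ∈ crossing,
      Fintype.card K ^ 2 * #(hits e) = Fintype.card K ^ Fintype.card J := by
    intro e he
    induction e with | _ x y
    have hne : cls x ≠ cls y := by simpa using (mem_filter.1 he).2
    simpa [hits] using card_sq_mul_card_filter_apply_eq_and_apply_eq hne (idx x) (idx y)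
  have hK : 0 < Fintype.card K := Nat.pos_of_ne_zero fun h => by simp [h] at hH
  refine hH.not_ge (Nat.le_of_mul_le_mul_right ?_ (pow_pos hK (Fintype.card J)))
  calc Fintype.card K ^ 2 * Fintype.card K ^ Fintype.card J
      = Fintype.card K ^ 2 * #(univ : Finset (J → K)) := by
        rw [card_univ, Fintype.card_fun]
    _ ≤ Fintype.card K ^ 2 * ∑ e ∈ crossing, #(hits e) := by
        gcongr
        exact (card_le_card hcover).trans card_biUnion_le
    _ = #crossing * Fintype.card K ^ Fintype.card J := by
        rw [mul_sum, sum_congr rfl hhits, sum_const, smul_eq_mul]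
    _ ≤ #H.edgeFinset * Fintype.card K ^ Fintype.card J := by
        gcongr
        exact filter_subset _ _

end Selection

theorem exists_pairwise_disjoint_of_forall_exists_disjoint {I α : Type*} [Fintype I]
    {X : I → Type*} (supp : ∀ i, X i → Finset α) (w : I → ℕ) (hw : ∀ i x, #(supp i x) ≤ w i)
    (h : ∀ i (T : Finset α), #T ≤ ∑ j, w j → ∃ x, Disjoint (supp i x) T) :
    ∃ x : ∀ i, X i, Pairwise (Disjoint on fun i => supp i (x i)) := by
  classical
  suffices hfin : ∀ s : Finset I, ∃ x : ∀ i, X i,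
      (s : Set I).PairwiseDisjoint fun i => supp i (x i) by
    obtain ⟨x, hx⟩ := hfin univ
    exact ⟨x, Set.pairwise_univ.1 (coe_univ (α := I) ▸ hx)⟩
  intro s
  induction s using Finset.induction_on with
  | empty =>
    choose x _ using fun i => h i ∅ (by simp)
    exact ⟨x, by simp⟩
  | insert i s hi ih =>
    obtain ⟨x, hx⟩ := ih
    have hcard : #(s.biUnion fun j => supp j (x j)) ≤ ∑ j, w j :=
      card_biUnion_le.trans <| (sum_le_sum fun j _ => hw j _).trans <|
        sum_le_sum_of_subset (subset_univ s)
    obtain ⟨y, hy⟩ := h i _ hcard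
    have hupdate : ∀ j ∈ s, update x i y j = x j := fun j hj =>
      update_of_ne (ne_of_mem_of_not_mem hj hi) y x
    refine ⟨update x i y, ?_⟩
    rw [coe_insert, Set.pairwiseDisjoint_insert_of_notMem (mod_cast hi), update_self]
    refine ⟨fun j hj k hk hjk => ?_, fun j hj => ?_⟩
    · simpa only [Function.onFun, hupdate j hj, hupdate k hk] using hx hj hk hjk
    · rw [hupdate j hj]
      exact (disjoint_biUnion_right _ _ _).1 hy j hj

section ComponentSizes

variable {β : Type*} [Fintype β] {F : SimpleGraph β}

theorem sum_ncard_supp_eq_card [Fintype F.ConnectedComponent] :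
    ∑ K : F.ConnectedComponent, K.supp.ncard = Fintype.card β := by
  classical
  simp only [← Nat.card_coe_set_eq, Nat.card_eq_fintype_card]
  rw [← Fintype.card_sigma]
  exact Fintype.card_congr (Equiv.sigmaFiberEquiv F.connectedComponentMk)

theorem card_le_mul_of_ncard_supp_le {ℓ c : ℕ}
    (hℓ : Nat.card F.ConnectedComponent ≤ ℓ) (hc : ∀ K : F.ConnectedComponent, K.supp.ncard ≤ c) :
    Fintype.card β ≤ ℓ * c := by
  have := Fintype.ofFinite F.ConnectedComponent
  rw [Nat.card_eq_fintype_card] at hℓ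
  calc Fintype.card β = ∑ K : F.ConnectedComponent, K.supp.ncard := sum_ncard_supp_eq_card.symm
    _ ≤ Fintype.card F.ConnectedComponent * c := sum_le_card_nsmul _ _ _ fun K _ => hc K
    _ ≤ ℓ * c := by gcongr

end ComponentSizes

section ComponentCopies

open SimpleGraph

variable {α β : Type} {F : SimpleGraph β} {G : SimpleGraph α} {S T : Finset α}

theorem hasIndCopyAvoiding_iff_exists_embedding :
    HasIndCopyAvoiding G F S ↔ ∃ f : F ↪g G, ∀ x, f x ∉ S :=
  ⟨fun ⟨f, hfS, hf⟩ => ⟨⟨f, (hf _ _).symm⟩, hfS⟩,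
    fun ⟨f, hfS⟩ => ⟨f.toEmbedding, hfS, fun _ _ => f.map_adj_iff.symm⟩⟩

theorem HasIndCopyAvoiding.mono (h : HasIndCopyAvoiding G F T) (hST : S ⊆ T) :
    HasIndCopyAvoiding G F S :=
  h.imp fun _ hf => ⟨fun x hx => hf.1 x (hST hx), hf.2⟩

theorem exists_pairwise_disjoint_component_embeddings [Fintype β] [DecidableEq α] {N : ℕ}
    (h : ∀ (K : F.ConnectedComponent) (T : Finset α), #T ≤ N * Fintype.card β →
      HasIndCopyAvoiding G (F.induce K.supp) (S ∪ T)) :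
    ∃ g : ∀ p : F.ConnectedComponent × Fin N, F.induce p.1.supp ↪g G,
      (∀ p x, g p x ∉ S) ∧ Pairwise (Disjoint on fun p => Set.range (g p)) := by
  classical
  have := Fintype.ofFinite F.ConnectedComponent
  have hsum : ∑ q : F.ConnectedComponent × Fin N, q.1.supp.ncard = N * Fintype.card β := by
    simp [Fintype.sum_prod_type, ← mul_sum, sum_ncard_supp_eq_card]
  obtain ⟨g, hg⟩ := exists_pairwise_disjoint_of_forall_exists_disjoint
    (X := fun p : F.ConnectedComponent × Fin N =>
      {g : F.induce p.1.supp ↪g G // ∀ x, g x ∉ S})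
    (fun p g => univ.map g.1.toEmbedding) (fun p => p.1.supp.ncard)
    (fun p g => by simp [Set.ncard_eq_toFinset_card']) <| by
      intro p T hT
      obtain ⟨g, hg⟩ := hasIndCopyAvoiding_iff_exists_embedding.1 (h p.1 T (hT.trans hsum.le))
      simp only [mem_union, not_or] at hg
      exact ⟨⟨g, fun x => (hg x).1⟩, disjoint_left.2 <| forall_mem_map.2 fun x _ => (hg x).2⟩
  refine ⟨fun p => (g p).1, fun p => (g p).2, fun p q hpq => ?_⟩
  simpa [Function.onFun, ← disjoint_coe] using hg hpq

/-- A packing of `N` numbered copies of each component of `F` into `G`: the vertices `f (x, a)`,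
for `x` in a component `K`, induce the `a`-th copy of `K`. All copies are vertex-disjoint because
`f` is injective, but edges between different copies are not controlled. -/
def IsComponentPacking (F : SimpleGraph β) (G : SimpleGraph α) {N : ℕ}
    (f : β × Fin N ↪ α) : Prop :=
  ∀ a x y, F.connectedComponentMk x = F.connectedComponentMk y →
    (G.Adj (f (x, a)) (f (y, a)) ↔ F.Adj x y)

theorem exists_isComponentPacking_of_pairwise_disjoint {N : ℕ}
    (g : ∀ p : F.ConnectedComponent × Fin N, F.induce p.1.supp ↪g G)
    (hg : Pairwise (Disjoint on fun p => Set.range (g p))) :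
    ∃ f : β × Fin N ↪ α, IsComponentPacking F G f ∧ ∀ p, ∃ q, f p ∈ Set.range (g q) := by
  let f (p : β × Fin N) : α := g (F.connectedComponentMk p.1, p.2) ⟨p.1, rfl⟩
  have f_eq (K : F.ConnectedComponent) (x : K.supp) (a : Fin N) : f (x, a) = g (K, a) x := by
    obtain ⟨x, rfl⟩ := x
    rfl
  have f_mem (p : β × Fin N) : f p ∈ Set.range (g (F.connectedComponentMk p.1, p.2)) :=
    Set.mem_range_self _
  have hinj : Injective f := by
    rintro ⟨x, a⟩ ⟨y, b⟩ hxy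
    have hcopy : (F.connectedComponentMk x, a) = (F.connectedComponentMk y, b) := by
      by_contra hne
      exact Set.disjoint_left.1 (hg hne) (f_mem (x, a)) (hxy ▸ f_mem (y, b))
    obtain ⟨hK, rfl⟩ := Prod.mk.inj hcopy
    rw [f_eq _ ⟨x, hK⟩, f_eq _ ⟨y, rfl⟩] at hxy
    exact congrArg (·.1, a) ((g _).injective hxy)
  refine ⟨⟨f, hinj⟩, fun a x y hK => ?_, fun p => ⟨_, f_mem p⟩⟩
  change G.Adj (f (x, a)) (f (y, a)) ↔ F.Adj x y
  rw [f_eq _ ⟨x, hK⟩, f_eq _ ⟨y, rfl⟩, Embedding.map_adj_iff, comap_adj]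
  rfl

theorem IsComponentPacking.exists_embedding [Fintype β] {N d : ℕ} {f : β × Fin N ↪ α}
    (hf : IsComponentPacking F G f) (hG : DegeneracyLE G d) (hN : 0 < N)
    (hdN : d * Fintype.card β ≤ N) :
    ∃ g : F ↪g G, Set.range g ⊆ Set.range f := by
  classical
  have hedges : #(G.comap f).edgeFinset < Fintype.card (Fin N) ^ 2 := by
    have hle := (hG.comap f).card_edgeFinset_le
    have hdNN : d * (Fintype.card β * N) ≤ N ^ 2 := by
      rw [← mul_assoc, sq]
      gcongr
    have hNN : 0 < N ^ 2 := by positivity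
    rw [Fintype.card_prod, Fintype.card_fin, Nat.mul_sub_one] at hle
    rw [Fintype.card_fin]
    rcases d.eq_zero_or_pos with rfl | hd <;> omega
  obtain ⟨s, hs⟩ := exists_selection_of_card_edgeFinset_lt (G.comap f)
    (fun p => F.connectedComponentMk p.1) (fun p => p.2) hedges
  let g (x : β) : α := f (x, s (F.connectedComponentMk x))
  have hinj : Injective g := fun x y hxy => congrArg Prod.fst (f.injective hxy)
  refine ⟨⟨⟨g, hinj⟩, fun {x y} => ?_⟩, Set.range_subset_iff.2 fun x => Set.mem_range_self _⟩
  change G.Adj (g x) (g y) ↔ F.Adj x y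
  by_cases hK : F.connectedComponentMk x = F.connectedComponentMk y
  · rw [show g x = f (x, s (F.connectedComponentMk y)) by rw [← hK]]
    exact hf _ x y hK
  · exact iff_of_false (fun hadj => hK (hs _ _ hadj rfl rfl))
      fun hadj => hK (ConnectedComponent.eq.2 hadj.reachable)

theorem exists_component_not_hasIndCopyAvoiding_union [Fintype β] [Nonempty β]
    [DecidableEq α] {d : ℕ} (hd : 1 ≤ d) (hG : DegeneracyLE G d) (hS : ¬ HasIndCopyAvoiding G F S) :
    ∃ (K : F.ConnectedComponent) (T : Finset α), #T ≤ d * Fintype.card β ^ 2 ∧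
      ¬ HasIndCopyAvoiding G (F.induce K.supp) (S ∪ T) := by
  by_contra! h
  have hN : 0 < d * Fintype.card β := Nat.mul_pos hd Fintype.card_pos
  obtain ⟨c, hcS, hc⟩ := exists_pairwise_disjoint_component_embeddings
    (N := d * Fintype.card β) fun K T hT => h K T (hT.trans_eq (by ring))
  obtain ⟨f, hf, hfc⟩ := exists_isComponentPacking_of_pairwise_disjoint c hc
  obtain ⟨g, hgf⟩ := hf.exists_embedding hG hN le_rfl
  refine hS (hasIndCopyAvoiding_iff_exists_embedding.2 ⟨g, fun x => ?_⟩)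
  obtain ⟨p, hp⟩ := hgf (Set.mem_range_self x)
  obtain ⟨q, y, hqy⟩ := hfc p
  exact hp ▸ hqy ▸ hcS q y

end ComponentCopies

section Hitting

variable {α ι : Type} {β : ι → Type} {G : SimpleGraph α} {F : ∀ i, SimpleGraph (β i)}
  {S : Finset α}

theorem optInd_le_card (hS : IsIndHitting G F S) : optInd G F ≤ #S :=
  Nat.sInf_le ⟨S, hS, rfl⟩

theorem exists_isIndHitting_card_eq_optInd (hF : ∃ S : Finset α, IsIndHitting G F S) :
    ∃ S : Finset α, IsIndHitting G F S ∧ #S = optInd G F :=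
  Nat.sInf_mem (s := {n | ∃ S : Finset α, IsIndHitting G F S ∧ #S = n}) <|
    let ⟨S, hS⟩ := hF
    ⟨#S, S, hS, rfl⟩

theorem isIndHitting_univ [Fintype α] [∀ i, Nonempty (β i)] : IsIndHitting G F univ :=
  fun i ⟨_, hf, _⟩ => hf (Classical.arbitrary (β i)) (mem_univ _)

theorem IsIndHitting.exists_components_isIndHitting_union [Fintype ι] [∀ i, Fintype (β i)]
    [∀ i, Nonempty (β i)] [DecidableEq α] {d : ℕ} (hd : 1 ≤ d) (hG : DegeneracyLE G d)
    (hS : IsIndHitting G F S) :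
    ∃ (comp : ∀ i, (F i).ConnectedComponent) (T : Finset α),
      #T ≤ ∑ i, d * Fintype.card (β i) ^ 2 ∧
        IsIndHitting G (fun i => (F i).induce (comp i).supp) (S ∪ T) := by
  choose comp T hTcard hT using fun i => exists_component_not_hasIndCopyAvoiding_union hd hG (hS i)
  refine ⟨comp, univ.biUnion T, card_biUnion_le.trans (sum_le_sum fun i _ => hTcard i),
    fun i h => hT i (h.mono ?_)⟩
  exact union_subset_union_right (subset_biUnion_of_mem T (mem_univ i))

theorem sum_mul_card_sq_le [Fintype ι] [∀ i, Fintype (β i)] {ℓ c : ℕ} (d : ℕ)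
    (hℓ : ∀ i, Nat.card (F i).ConnectedComponent ≤ ℓ)
    (hc : ∀ i, ∀ K : (F i).ConnectedComponent, K.supp.ncard ≤ c) :
    ∑ i, d * Fintype.card (β i) ^ 2 ≤ Fintype.card ι * ℓ ^ 2 * c ^ 2 * d :=
  calc ∑ i, d * Fintype.card (β i) ^ 2 ≤ ∑ _i : ι, d * (ℓ * c) ^ 2 := by
        gcongr with i
        exact card_le_mul_of_ncard_supp_le (hℓ i) (hc i)
    _ = Fintype.card ι * ℓ ^ 2 * c ^ 2 * d := by
        rw [sum_const, card_univ, smul_eq_mul]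
        ring

end Hitting

theorem stmt1_general {ι : Type} [Fintype ι] {β : ι → Type} [∀ i, Fintype (β i)]
    [∀ i, Nonempty (β i)] (F : ∀ i, SimpleGraph (β i)) (d : ℕ) (hd : 1 ≤ d)
    {α : Type} (G : SimpleGraph α) (hdeg : DegeneracyLE G d)
    (hF : ∃ S : Finset α, IsIndHitting G F S) :
    ∃ comp : ∀ i, (F i).ConnectedComponent,
      optInd G (fun i => (F i).induce (comp i).supp) ≤
        optInd G F + ∑ i, d * Fintype.card (β i) ^ 2 := by
  classical
  obtain ⟨S, hS, hScard⟩ := exists_isIndHitting_card_eq_optInd hF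
  obtain ⟨comp, T, hTcard, hT⟩ := hS.exists_components_isIndHitting_union hd hdeg
  refine ⟨comp, (optInd_le_card hT).trans ((card_union_le S T).trans ?_)⟩
  rw [hScard]
  gcongr

/-- if `ℓ` bounds the number of connected components of every `F ∈ ℱ`,
`c` bounds the number of vertices of every connected component of every `F ∈ ℱ`,
`d ≥ 1`, and `G` has degeneracy at most `d`, then there is a choice `comp` of one
connected component of each graph of `ℱ` (i.e. a member `ℱ' ∈ Conn(ℱ)`) such that
`opt*(G, ℱ') ≤ opt*(G, ℱ) + m·ℓ²·c³·d`. -/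
theorem stmt1 {ι : Type} [Fintype ι] {β : ι → Type} [∀ i, Fintype (β i)]
    [∀ i, Nonempty (β i)]
    (F : ∀ i, SimpleGraph (β i)) (ℓ c : ℕ)
    (hℓ : ∀ i, Nat.card (F i).ConnectedComponent ≤ ℓ)
    (hc : ∀ i, ∀ K : (F i).ConnectedComponent, K.supp.ncard ≤ c)
    (d : ℕ) (hd : 1 ≤ d)
    {α : Type} [Fintype α] (G : SimpleGraph α) (hdeg : DegeneracyLE G d) :
    ∃ comp : ∀ i, (F i).ConnectedComponent,
      optInd G (fun i => (F i).induce (comp i).supp) ≤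
        optInd G F + Fintype.card ι * ℓ ^ 2 * c ^ 3 * d := by
  obtain ⟨comp, hcomp⟩ := stmt1_general F d hd G hdeg ⟨univ, isIndHitting_univ⟩
  have hc_pow : c ^ 2 ≤ c ^ 3 := by
    rcases c.eq_zero_or_pos with rfl | hc_pos
    · rfl
    · exact Nat.pow_le_pow_right hc_pos (by norm_num)
  refine ⟨comp, hcomp.trans (Nat.add_le_add_left ?_ _)⟩
  exact (sum_mul_card_sq_le d hℓ hc).trans (by gcongr)
end

section
/- Let γ ≥ 1 and d ≥ 1 be integers, let C and D be graphs each with at most γ − 1 vertices, and let G be a finite simple graph in which every subgraph H satisfies 2·|E(H)| ≤ d·|V(H)| (every subgraph has average degree at most d). Set γ' = (2d+1)·γ. If G contains γ' pairwise vertex-disjoint induced subgraphs C₁,…,C_{γ'} isomorphic to C and γ' pairwise vertex-disjoint induced subgraphs D₁,…,D_{γ'} isomorphic to D, then there exist indices i and j such that C_i and D_j are vertex-disjoint and there is no edge of G between a vertex of C_i and a vertex of D_j; consequently G contains an induced subgraph isomorphic to the disjoint union of C and D. -/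
/-- `f` realizes an induced subgraph copy of `F` in `G`. -/
def IsIndCopy {α β : Type} (G : SimpleGraph α) (F : SimpleGraph β) (f : β ↪ α) : Prop :=
  ∀ u v, F.Adj u v ↔ G.Adj (f u) (f v)

/-!
If every `Cᵢ` meets or sends an edge to every `Dⱼ`, choose for each `(i, j)` an ordered pair
`(x, y) ∈ Cᵢ × Dⱼ` with `x = y` or `x ~ y`. Disjointness within each family makes these
`N²` pairs distinct, where `N = (2d + 1)γ`. But `S = ⋃ Cᵢ` and `T = ⋃ Dⱼ` have at most `N(γ - 1)`
vertices each, so there are at most `N(γ - 1)` pairs with `x = y`, and sparseness of `G[S ∪ T]`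
leaves at most `2dN(γ - 1)` pairs with `x ~ y`. The total `(2d + 1)(γ - 1)N` is less than `N²`.
-/

open Finset
open scoped Function

section Relations

variable {ι κ V W : Type*} (r : V → W → Prop) [∀ x, DecidablePred (r x)]

lemma card_mul_card_le_card_interedges_biUnion [DecidableEq V] [DecidableEq W]
    {s : Finset ι} {t : Finset κ} {A : ι → Finset V} {B : κ → Finset W}
    (hA : (s : Set ι).PairwiseDisjoint A) (hB : (t : Set κ).PairwiseDisjoint B)
    (hr : ∀ i ∈ s, ∀ j ∈ t, ∃ x ∈ A i, ∃ y ∈ B j, r x y) :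
    #s * #t ≤ #(Rel.interedges r (s.biUnion A) (t.biUnion B)) := by
  have hdisj : ((s ×ˢ t : Finset (ι × κ)) : Set (ι × κ)).PairwiseDisjoint
      fun p ↦ Rel.interedges r (A p.1) (B p.2) := by
    rintro ⟨i, j⟩ hp ⟨i', j'⟩ hp' hne
    obtain ⟨hi, hj⟩ := mem_product.1 hp
    obtain ⟨hi', hj'⟩ := mem_product.1 hp'
    refine disjoint_left.2 fun e he he' ↦ hne (Prod.ext ?_ ?_)
    · exact hA.elim_finset hi hi' e.1 (Rel.mem_interedges_iff.1 he).1
        (Rel.mem_interedges_iff.1 he').1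
    · exact hB.elim_finset hj hj' e.2 (Rel.mem_interedges_iff.1 he).2.1
        (Rel.mem_interedges_iff.1 he').2.1
  rw [Rel.interedges_biUnion, ← card_product]
  refine card_le_card_biUnion hdisj fun p hp ↦ ?_
  obtain ⟨x, hx, y, hy, hxy⟩ := hr p.1 (mem_product.1 hp).1 p.2 (mem_product.1 hp).2
  exact ⟨(x, y), Rel.mk_mem_interedges_iff.2 ⟨hx, hy, hxy⟩⟩

end Relations

section SparseGraphs

variable {ι κ V : Type*} (G : SimpleGraph V)

/-- Two vertex sets are anticomplete in `G` if they are disjoint and no edge of `G` joins them, so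
that induced subgraphs on them together induce a disjoint union. -/
def IsAnticomplete (s t : Set V) : Prop :=
  ∀ x ∈ s, ∀ y ∈ t, x ≠ y ∧ ¬ G.Adj x y

lemma card_interedges_eq_or_adj [DecidableEq V] [DecidableRel G.Adj] (s t : Finset V) :
    #(Rel.interedges (fun x y ↦ x = y ∨ G.Adj x y) s t) = #(s ∩ t) + #(G.interedges s t) := by
  have hdiag : {p ∈ s ×ˢ t | p.1 = p.2} = (s ∩ t).diag := by
    ext p
    grind
  have hdisj : Disjoint (s ∩ t).diag (G.interedges s t) := by
    refine disjoint_left.2 fun p hp hadj ↦ ?_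
    exact (G.mem_interedges_iff.1 hadj).2.2.ne (mem_diag.1 hp).2
  rw [Rel.interedges, filter_or, hdiag, ← G.interedges_def, card_union_of_disjoint hdisj, diag_card]

lemma card_interedges_self_eq_two_mul_ncard_edgeSet [DecidableRel G.Adj] (s : Finset V) :
    #(G.interedges s s) = 2 * ((⊤ : G.Subgraph).induce (s : Set V)).edgeSet.ncard := by
  classical
  let H := (⊤ : G.Subgraph).induce (s : Set V)
  have : Fintype H.verts := s.finite_toSet.fintype
  have hE : H.edgeSet.ncard = #H.coe.edgeFinset := by
    rw [← H.image_coe_edgeSet_coe,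
      Set.ncard_image_of_injective _ (Sym2.map.injective Subtype.val_injective),
      ← SimpleGraph.coe_edgeFinset, Set.ncard_coe_finset]
  have hpairs : (univ.filter fun (x, y) ↦ H.coe.Adj x y).map
      ((Function.Embedding.subtype _).prodMap (Function.Embedding.subtype _)) =
      G.interedges s s := by
    ext ⟨x, y⟩
    simp +contextual [H, G.mk_mem_interedges_iff]
  rw [hE, SimpleGraph.two_mul_card_edgeFinset, ← hpairs, card_map]

variable {G}

lemma exists_isAnticomplete_of_card_lt [Fintype ι] [Fintype κ] [DecidableRel G.Adj] {a b d : ℕ}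
    (hG : ∀ s : Finset V, #(G.interedges s s) ≤ d * #s)
    {A : ι → Finset V} {B : κ → Finset V}
    (hA : Pairwise (Disjoint on A)) (hB : Pairwise (Disjoint on B))
    (hcardA : ∀ i, #(A i) ≤ a) (hcardB : ∀ j, #(B j) ≤ b)
    (hab : Fintype.card ι * a + d * (Fintype.card ι * a + Fintype.card κ * b) <
      Fintype.card ι * Fintype.card κ) :
    ∃ i j, IsAnticomplete G (A i : Set V) (B j) := by
  classical
  by_contra hcon
  set S := univ.biUnion A
  set T := univ.biUnion B
  have hS : #S ≤ Fintype.card ι * a := card_biUnion_le_card_mul _ _ _ fun i _ ↦ hcardA i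
  have hT : #T ≤ Fintype.card κ * b := card_biUnion_le_card_mul _ _ _ fun j _ ↦ hcardB j
  have htouch : ∀ i ∈ univ, ∀ j ∈ univ, ∃ x ∈ A i, ∃ y ∈ B j, x = y ∨ G.Adj x y := by
    simpa only [IsAnticomplete, mem_coe, not_exists, not_forall, exists_prop, not_and_or, not_not,
      mem_univ, forall_const] using hcon
  have hadj : #(G.interedges S T) ≤ d * (#S + #T) :=
    calc #(G.interedges S T)
      _ ≤ #(G.interedges (S ∪ T) (S ∪ T)) :=
        card_le_card (G.interedges_mono subset_union_left subset_union_right)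
      _ ≤ d * #(S ∪ T) := hG _
      _ ≤ d * (#S + #T) := by gcongr; exact card_union_le S T
  refine hab.not_ge ?_
  calc Fintype.card ι * Fintype.card κ
    _ ≤ #(Rel.interedges (fun x y ↦ x = y ∨ G.Adj x y) S T) :=
      card_mul_card_le_card_interedges_biUnion _ (hA.set_pairwise _) (hB.set_pairwise _) htouch
    _ = #(S ∩ T) + #(G.interedges S T) := card_interedges_eq_or_adj G S T
    _ ≤ #S + d * (#S + #T) := add_le_add (card_le_card inter_subset_left) hadj
    _ ≤ Fintype.card ι * a + d * (Fintype.card ι * a + Fintype.card κ * b) := by gcongr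

lemma exists_isAnticomplete_of_card_eq [Fintype ι] [Fintype κ] [DecidableRel G.Adj] {d k : ℕ}
    (hG : ∀ s : Finset V, #(G.interedges s s) ≤ d * #s)
    {A : ι → Finset V} {B : κ → Finset V}
    (hA : Pairwise (Disjoint on A)) (hB : Pairwise (Disjoint on B))
    (hcardA : ∀ i, #(A i) ≤ k) (hcardB : ∀ j, #(B j) ≤ k)
    (hικ : Fintype.card ι = Fintype.card κ) (hk : (2 * d + 1) * k < Fintype.card ι) :
    ∃ i j, IsAnticomplete G (A i : Set V) (B j) := by
  refine exists_isAnticomplete_of_card_lt hG hA hB hcardA hcardB ?_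
  rw [← hικ]
  calc Fintype.card ι * k + d * (Fintype.card ι * k + Fintype.card ι * k)
    _ = Fintype.card ι * ((2 * d + 1) * k) := by ring
    _ < Fintype.card ι * Fintype.card ι := Nat.mul_lt_mul_of_pos_left hk (Nat.zero_lt_of_lt hk)

end SparseGraphs

lemma IsIndCopy.exists_sum {α β γ : Type} {G : SimpleGraph α} {C : SimpleGraph β}
    {D : SimpleGraph γ} {f : β ↪ α} {g : γ ↪ α} (hf : IsIndCopy G C f) (hg : IsIndCopy G D g)
    (hfg : IsAnticomplete G (Set.range f) (Set.range g)) :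
    ∃ h : (β ⊕ γ) ↪ α, IsIndCopy G (C ⊕g D) h := by
  simp only [IsAnticomplete, Set.forall_mem_range] at hfg
  refine ⟨⟨Sum.elim f g, f.injective.sumElim g.injective fun u v ↦ (hfg u v).1⟩, ?_⟩
  rintro (u | u) (v | v)
  · simpa using hf u v
  · simpa using (hfg u v).2
  · simpa [G.adj_comm] using (hfg v u).2
  · simpa using hg u v

lemma pairwise_disjoint_map_univ {ι β α : Type*} [Fintype β] {f : ι → (β ↪ α)}
    (hf : ∀ i j, i ≠ j → ∀ x y, f i x ≠ f j y) :
    Pairwise (Disjoint on fun i ↦ univ.map (f i)) := by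
  intro i j hij
  simpa [Function.onFun, disjoint_left, eq_comm] using hf i j hij

theorem stmt5_general {βC βD α : Type} [Fintype βC] [Fintype βD]
    (C : SimpleGraph βC) (D : SimpleGraph βD) (γ d : ℕ)
    (hγ : 1 ≤ γ)
    (hCsize : Fintype.card βC ≤ γ - 1) (hDsize : Fintype.card βD ≤ γ - 1)
    (G : SimpleGraph α)
    (havg : ∀ H : G.Subgraph, H.verts.Finite → 2 * H.edgeSet.ncard ≤ d * H.verts.ncard)
    (fC : Fin ((2 * d + 1) * γ) → (βC ↪ α)) (hfC : ∀ j, IsIndCopy G C (fC j))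
    (hdisjC : ∀ j j', j ≠ j' → ∀ x y, fC j x ≠ fC j' y)
    (fD : Fin ((2 * d + 1) * γ) → (βD ↪ α)) (hfD : ∀ j, IsIndCopy G D (fD j))
    (hdisjD : ∀ j j', j ≠ j' → ∀ x y, fD j x ≠ fD j' y) :
    (∃ i j, (∀ x y, fC i x ≠ fD j y) ∧ ∀ x y, ¬ G.Adj (fC i x) (fD j y)) ∧
      ∃ g : (βC ⊕ βD) ↪ α, IsIndCopy G (C ⊕g D) g := by
  classical
  have hG (s : Finset α) : #(G.interedges s s) ≤ d * #s := by
    simpa [card_interedges_self_eq_two_mul_ncard_edgeSet] using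
      havg ((⊤ : G.Subgraph).induce s) s.finite_toSet
  have hcount : (2 * d + 1) * (γ - 1) < Fintype.card (Fin ((2 * d + 1) * γ)) := by
    rw [Fintype.card_fin]
    gcongr
    exact Nat.sub_lt hγ one_pos
  obtain ⟨i, j, hij⟩ := exists_isAnticomplete_of_card_eq hG
    (pairwise_disjoint_map_univ hdisjC) (pairwise_disjoint_map_univ hdisjD)
    (fun i ↦ (card_map (fC i)).trans_le hCsize) (fun j ↦ (card_map (fD j)).trans_le hDsize)
    rfl hcount
  simp only [coe_map, coe_univ, Set.image_univ] at hij
  refine ⟨⟨i, j, fun x y ↦ ?_, fun x y ↦ ?_⟩, (hfC i).exists_sum (hfD j) hij⟩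
  · exact (hij _ ⟨x, rfl⟩ _ ⟨y, rfl⟩).1
  · exact (hij _ ⟨x, rfl⟩ _ ⟨y, rfl⟩).2

/-- let `γ ≥ 1`, `d ≥ 1`, let `C`, `D` have at most `γ − 1` vertices
each, and let `G` be a graph every subgraph `H` of which satisfies
`2·|E(H)| ≤ d·|V(H)|`.  If `G` contains `γ' = (2d+1)·γ` pairwise vertex-disjoint
induced copies `C₁,…,C_{γ'}` of `C` and `γ'` pairwise vertex-disjoint induced
copies `D₁,…,D_{γ'}` of `D`, then there are indices `i`, `j` such that `C_i` and
`D_j` are vertex-disjoint with no edge of `G` between them; consequently `G`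
contains an induced subgraph isomorphic to the disjoint union `C ⊕g D`. -/
theorem stmt5 {βC βD α : Type} [Fintype βC] [Fintype βD] [Fintype α]
    (C : SimpleGraph βC) (D : SimpleGraph βD) (γ d : ℕ)
    (hγ : 1 ≤ γ) (hd : 1 ≤ d)
    (hCsize : Fintype.card βC ≤ γ - 1) (hDsize : Fintype.card βD ≤ γ - 1)
    (G : SimpleGraph α)
    (havg : ∀ H : G.Subgraph, 2 * H.edgeSet.ncard ≤ d * H.verts.ncard)
    (fC : Fin ((2 * d + 1) * γ) → (βC ↪ α)) (hfC : ∀ j, IsIndCopy G C (fC j))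
    (hdisjC : ∀ j j', j ≠ j' → ∀ x y, fC j x ≠ fC j' y)
    (fD : Fin ((2 * d + 1) * γ) → (βD ↪ α)) (hfD : ∀ j, IsIndCopy G D (fD j))
    (hdisjD : ∀ j j', j ≠ j' → ∀ x y, fD j x ≠ fD j' y) :
    (∃ i j, (∀ x y, fC i x ≠ fD j y) ∧ ∀ x y, ¬ G.Adj (fC i x) (fD j y)) ∧
      ∃ g : (βC ⊕ βD) ↪ α, IsIndCopy G (C ⊕g D) g := by
  exact stmt5_general C D γ d hγ hCsize hDsize G (fun H _ ↦ havg H) fC hfC hdisjC fD hfD hdisjD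
end

section
/- Let G be a finite simple graph, σ a linear order on V(G), and γ ≥ 1 an integer. Let 𝒱 be a collection of subsets of V(G) such that every V ∈ 𝒱 satisfies |V| ≤ γ and the induced subgraph G[V] is connected. Let w be a real number with w ≥ wcol_γ(G,σ), let t > 0, and let r be an integer with r ≥ (1 + 1/t)·w. Then for every subcollection 𝒰 ⊆ 𝒱 and every hitting set S of 𝒰, there exists a set S' with S ⊆ S' ⊆ V(G), |S'| ≤ (1+t)·|S|, such that S' intersects every set X that is the core of an r-sunflower in 𝒰. -/
/-- `WR_r(G, σ, v)`: the set of vertices `u` reachable from `v` by a walk of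
length at most `r` on which every vertex is `≤ u` in the order `σ`. -/
def WR {α : Type} (G : SimpleGraph α) (σ : LinearOrder α) (r : ℕ) (v : α) : Set α :=
  {u | ∃ p : G.Walk v u, p.length ≤ r ∧ ∀ w ∈ p.support, σ.le w u}

/-- `wcol_r(G, σ)`: the weak `r`-coloring number of `G` under the order `σ`. -/
noncomputable def wcol {α : Type} [Fintype α] (G : SimpleGraph α)
    (σ : LinearOrder α) (r : ℕ) : ℕ :=
  Finset.univ.sup fun v => (WR G σ r v).ncard

/-- `X` is the core of an `r`-sunflower in `𝒰`: there are `r` distinct members of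
`𝒰` whose pairwise intersections all equal `X`. -/
def IsSunflowerWithCore {α : Type} [DecidableEq α] (𝒰 : Set (Finset α)) (r : ℕ)
    (X : Finset α) : Prop :=
  ∃ 𝒮 : Finset (Finset α), ↑𝒮 ⊆ 𝒰 ∧ 𝒮.card = r ∧
    ∀ A ∈ 𝒮, ∀ B ∈ 𝒮, A ≠ B → A ∩ B = X

/-!
The set `S'` adds to `S` the vertices weakly reachable from at least `w / t` vertices of `S`; double
counting the pairs `(s, v)` with `s ∈ S` and `v` weakly reachable from `s` shows that there are at
most `t * |S|` of them. If a core `X` of a sunflower misses `S`, let `x` be the `σ`-maximum of `X`.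
In each member `A` of the sunflower pick a vertex outside `X`: the `σ`-maximum of `A` if that is not
in `X`, and otherwise, when this maximum must be `x`, a vertex of `S`. In the first case the picked
vertex is weakly reachable from `x`, in the second `x` is weakly reachable from it. The picked
vertices are distinct since the petals are disjoint, so at least `r - w ≥ w / t` vertices of `S`
weakly reach `x`, that is, `x ∈ S'`.
-/

section Sunflower

variable {α : Type*} [DecidableEq α] {𝒮 : Finset (Finset α)} {X : Finset α}

theorem core_subset_of_pairwise_inter_eq (h𝒮 : (𝒮 : Set (Finset α)).Pairwise (· ∩ · = X))
    (hcard : 1 < 𝒮.card) {A : Finset α} (hA : A ∈ 𝒮) : X ⊆ A := by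
  obtain ⟨B, hB, hBA⟩ := Finset.exists_mem_ne hcard A
  exact h𝒮 hA hB hBA.symm ▸ Finset.inter_subset_left

theorem card_le_card_of_pairwise_inter_eq (h𝒮 : (𝒮 : Set (Finset α)).Pairwise (· ∩ · = X))
    {T : Finset α} (hT : ∀ A ∈ 𝒮, ∃ a ∈ T, a ∈ A \ X) : 𝒮.card ≤ T.card := by
  refine Finset.card_le_card_of_forall_subsingleton (fun A a ↦ a ∈ A \ X) hT ?_
  rintro a - A ⟨hA, haA⟩ B ⟨hB, haB⟩
  rw [Finset.mem_sdiff] at haA haB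
  by_contra hAB
  exact haA.2 (h𝒮 hA hB hAB ▸ Finset.mem_inter.2 ⟨haA.1, haB.1⟩)

theorem card_le_card_add_card_filter_of_pairwise_inter_eq
    (h𝒮 : (𝒮 : Set (Finset α)).Pairwise (· ∩ · = X)) {R : α → Finset α} {S : Finset α} {x : α}
    (hx : ∀ A ∈ 𝒮, x ∈ A) (hR : ∀ A ∈ 𝒮, ∃ m ∈ A, (m ∈ X → m = x) ∧ ∀ a ∈ A, m ∈ R a)
    (hS : ∀ A ∈ 𝒮, (S ∩ A).Nonempty) (hSX : Disjoint S X) :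
    𝒮.card ≤ (R x).card + (S.filter (x ∈ R ·)).card := by
  refine (card_le_card_of_pairwise_inter_eq h𝒮 fun A hA ↦ ?_).trans (Finset.card_union_le _ _)
  obtain ⟨m, hmA, hmx, hm⟩ := hR A hA
  by_cases hmX : m ∈ X
  · obtain rfl := hmx hmX
    obtain ⟨s, hs⟩ := hS A hA
    obtain ⟨hsS, hsA⟩ := Finset.mem_inter.1 hs
    exact ⟨s, Finset.mem_union_right _ (Finset.mem_filter.2 ⟨hsS, hm s hsA⟩),
      Finset.mem_sdiff.2 ⟨hsA, Finset.disjoint_left.1 hSX hsS⟩⟩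
  · exact ⟨m, Finset.mem_union_left _ (hm x (hx A hA)), Finset.mem_sdiff.2 ⟨hmA, hmX⟩⟩

end Sunflower

section DoubleCounting

variable {α β : Type*} [DecidableEq β] {R : α → Finset β} {S : Finset α} {c : ℝ}

/-- The elements that lie in at least `c` of the sets `R s` with `s ∈ S`; these are the vertices
added to the hitting set. Only elements of some `R s` are admitted, so that the set is finite even
when `c ≤ 0`. -/
noncomputable def popular (R : α → Finset β) (S : Finset α) (c : ℝ) : Finset β :=
  (S.biUnion R).filter fun v ↦ c ≤ (S.filter (v ∈ R ·)).card

theorem mem_popular_of_pos (hc : 0 < c) {v : β} (hv : c ≤ (S.filter (v ∈ R ·)).card) :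
    v ∈ popular R S c := by
  have hcard : 0 < (S.filter (v ∈ R ·)).card := by exact_mod_cast hc.trans_le hv
  obtain ⟨s, hs⟩ := Finset.card_pos.1 hcard
  exact Finset.mem_filter.2 ⟨Finset.mem_biUnion.2 ⟨s, Finset.mem_filter.1 hs⟩, hv⟩

theorem card_popular_mul_le {k : ℝ} (hR : ∀ s ∈ S, (R s).card ≤ k) :
    (popular R S c).card * c ≤ S.card * k := by
  simp only [← nsmul_eq_mul]
  refine Finset.card_nsmul_le_card_nsmul (fun v s ↦ v ∈ R s)
    (fun v hv ↦ (Finset.mem_filter.1 hv).2) fun s hs ↦ le_trans ?_ (hR s hs)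
  exact_mod_cast Finset.card_le_card fun v hv ↦ (Finset.mem_filter.1 hv).2

theorem card_popular_div_le {k t : ℝ} (ht : 0 < t) (hR : ∀ s ∈ S, (R s).card ≤ k) :
    (popular R S (k / t)).card ≤ t * S.card := by
  rcases lt_or_ge 0 k with hk | hk
  · refine le_of_mul_le_mul_right ((card_popular_mul_le hR).trans_eq ?_) (div_pos hk ht)
    field_simp
  · have hR_empty : ∀ s ∈ S, R s = ∅ := fun s hs ↦
      Finset.card_eq_zero.1 (by exact_mod_cast ((hR s hs).trans hk).antisymm (Nat.cast_nonneg _))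
    have hpopular : popular R S (k / t) = ∅ := Finset.subset_empty.1 <|
      (Finset.filter_subset _ _).trans (Finset.biUnion_subset.2 fun s hs ↦ (hR_empty s hs).subset)
    rw [hpopular, Finset.card_empty, Nat.cast_zero]
    positivity

end DoubleCounting

section WeakReachability

variable {α : Type} {G : SimpleGraph α} {σ : LinearOrder α} {γ : ℕ}

theorem mem_WR_self (G : SimpleGraph α) (σ : LinearOrder α) (γ : ℕ) (v : α) : v ∈ WR G σ γ v :=
  ⟨.nil, γ.zero_le, fun _ hu ↦ List.mem_singleton.1 hu ▸ σ.le_refl _⟩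

theorem mem_WR_of_preconnected_induce {V : Finset α} (hcard : V.card ≤ γ)
    (hV : (G.induce (V : Set α)).Preconnected) {v m : α} (hv : v ∈ V) (hm : m ∈ V)
    (hmax : ∀ u ∈ V, σ.le u m) : m ∈ WR G σ γ v := by
  obtain ⟨p, hp⟩ := (hV ⟨v, hv⟩ ⟨m, hm⟩).exists_isPath
  let f := (SimpleGraph.Embedding.induce (G := G) (V : Set α)).toHom
  have hlength : (p.map f).length < V.card := by
    simpa using hp.length_lt
  have hsupport : ∀ u ∈ (p.map f).support, u ∈ V := by
    simp only [SimpleGraph.Walk.support_map, List.mem_map]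
    rintro _ ⟨a, -, rfl⟩
    exact a.2
  exact ⟨p.map f, hlength.le.trans hcard, fun u hu ↦ hmax u (hsupport u hu)⟩

theorem encard_WR_le_wcol [Fintype α] (G : SimpleGraph α) (σ : LinearOrder α) (γ : ℕ) (v : α) :
    (WR G σ γ v).encard ≤ wcol G σ γ :=
  Set.encard_le_coe_iff_finite_ncard_le.2
    ⟨Set.toFinite _, Finset.le_sup (f := fun v ↦ (WR G σ γ v).ncard) (Finset.mem_univ v)⟩

theorem IsSunflowerWithCore.exists_mem_le_card_add_card_filter [DecidableEq α]
    {𝒰 : Set (Finset α)} {r : ℕ} {X : Finset α} (h : IsSunflowerWithCore 𝒰 r X)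
    (hr : 1 < r) (hX : X.Nonempty) (hsize : ∀ V ∈ 𝒰, V.card ≤ γ)
    (hconn : ∀ V ∈ 𝒰, (G.induce (V : Set α)).Preconnected)
    {R : α → Finset α} (hR : ∀ v, WR G σ γ v ⊆ R v)
    {S : Finset α} (hS : ∀ V ∈ 𝒰, (S ∩ V).Nonempty) (hSX : Disjoint S X) :
    ∃ x ∈ X, r ≤ (R x).card + (S.filter (x ∈ R ·)).card := by
  obtain ⟨𝒮, h𝒮𝒰, rfl, hinter⟩ := h
  have h𝒮 : (𝒮 : Set (Finset α)).Pairwise (· ∩ · = X) := fun A hA B hB ↦ hinter A hA B hB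
  have hXA : ∀ A ∈ 𝒮, X ⊆ A := fun A ↦ core_subset_of_pairwise_inter_eq h𝒮 hr
  obtain ⟨x, hxX, hxmax⟩ := X.exists_max_image id hX
  refine ⟨x, hxX, card_le_card_add_card_filter_of_pairwise_inter_eq h𝒮
    (fun A hA ↦ hXA A hA hxX) (fun A hA ↦ ?_) (fun A hA ↦ hS A (h𝒮𝒰 hA)) hSX⟩
  obtain ⟨m, hmA, hmmax⟩ := A.exists_max_image id (hX.mono (hXA A hA))
  refine ⟨m, hmA, fun hmX ↦ σ.le_antisymm _ _ (hxmax m hmX) (hmmax x (hXA A hA hxX)),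
    fun a ha ↦ hR a ?_⟩
  exact mem_WR_of_preconnected_induce (hsize A (h𝒮𝒰 hA)) (hconn A (h𝒮𝒰 hA)) ha hmA hmmax

theorem IsSunflowerWithCore.exists_mem_popular [DecidableEq α]
    {𝒰 : Set (Finset α)} {r : ℕ} {X : Finset α} (h : IsSunflowerWithCore 𝒰 r X)
    (hX : X.Nonempty) (hsize : ∀ V ∈ 𝒰, V.card ≤ γ)
    (hconn : ∀ V ∈ 𝒰, (G.induce (V : Set α)).Preconnected)
    {R : α → Finset α} (hR : ∀ v, WR G σ γ v ⊆ R v)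
    {k t : ℝ} (hk : ∀ v, (R v).card ≤ k) (ht : 0 < t) (hr : (1 + 1 / t) * k ≤ r)
    {S : Finset α} (hS : ∀ V ∈ 𝒰, (S ∩ V).Nonempty) (hSX : Disjoint S X) :
    ∃ x ∈ X, x ∈ popular R S (k / t) := by
  have hk1 : 1 ≤ k := by
    obtain ⟨x, -⟩ := hX
    have hR_pos : 1 ≤ (R x).card := Finset.card_pos.2 ⟨x, hR x (mem_WR_self G σ γ x)⟩
    exact le_trans (mod_cast hR_pos) (hk x)
  have hkt : 0 < k / t := by positivity
  have hr' : k + k / t ≤ r := by linarith [show (1 + 1 / t) * k = k + k / t by ring]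
  have hr1 : 1 < r := by
    rw [← Nat.one_lt_cast (α := ℝ)]
    linarith
  obtain ⟨x, hxX, hx⟩ :=
    h.exists_mem_le_card_add_card_filter hr1 hX hsize hconn hR hS hSX
  have hx' : (r : ℝ) ≤ (R x).card + (S.filter (x ∈ R ·)).card := mod_cast hx
  exact ⟨x, hxX, mem_popular_of_pos hkt (by linarith [hk x])⟩

end WeakReachability

theorem stmt6_general {α : Type} [DecidableEq α]
    (G : SimpleGraph α) (σ : LinearOrder α) (γ k : ℕ) (hk : ∀ v, (WR G σ γ v).encard ≤ k)
    (t : ℝ) (ht : 0 < t) (r : ℕ) (hr : (1 + 1 / t) * k ≤ r)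
    (𝒰 : Set (Finset α)) (hsize : ∀ V ∈ 𝒰, V.card ≤ γ)
    (hconn : ∀ V ∈ 𝒰, (G.induce (V : Set α)).Preconnected)
    (S : Finset α) (hS : ∀ V ∈ 𝒰, (S ∩ V).Nonempty) :
    ∃ S' : Finset α, S ⊆ S' ∧ (S'.card : ℝ) ≤ (1 + t) * S.card ∧
      ∀ X : Finset α, X.Nonempty → IsSunflowerWithCore 𝒰 r X → (S' ∩ X).Nonempty := by
  choose hfin hncard using fun v ↦ Set.encard_le_coe_iff_finite_ncard_le.1 (hk v)
  let R : α → Finset α := fun v ↦ (hfin v).toFinset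
  have hR : ∀ v, WR G σ γ v ⊆ R v := fun v ↦ (hfin v).coe_toFinset.superset
  have hR_card : ∀ v, ((R v).card : ℝ) ≤ k := fun v ↦
    mod_cast (Set.ncard_eq_toFinset_card _ (hfin v)).symm.trans_le (hncard v)
  refine ⟨S ∪ popular R S (k / t), Finset.subset_union_left, ?_, fun X hX hsun ↦ ?_⟩
  · have hunion : ((S ∪ popular R S (k / t)).card : ℝ) ≤ S.card + (popular R S (k / t)).card :=
      mod_cast Finset.card_union_le _ _
    linarith [card_popular_div_le ht fun s (_ : s ∈ S) ↦ hR_card s]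
  · by_cases hSX : Disjoint S X
    · obtain ⟨x, hxX, hx⟩ :=
        hsun.exists_mem_popular hX hsize hconn hR hR_card ht hr hS hSX
      exact ⟨x, Finset.mem_inter.2 ⟨Finset.mem_union_right _ hx, hxX⟩⟩
    · exact (Finset.not_disjoint_iff_nonempty_inter.1 hSX).mono
        (Finset.inter_subset_inter_right Finset.subset_union_left)

/-- let `𝒱` be a collection of subsets of `V(G)`, each of size at most
`γ` and inducing a connected subgraph of `G`.  Let `w ≥ wcol_γ(G,σ)`, `t > 0`,
and let `r ≥ (1 + 1/t)·w`.  Then for every `𝒰 ⊆ 𝒱` and every hitting set `S` of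
`𝒰` there is `S' ⊇ S` with `|S'| ≤ (1+t)·|S|` hitting every nonempty core of an
`r`-sunflower in `𝒰`. -/
theorem stmt6 {α : Type} [Fintype α] [DecidableEq α]
    (G : SimpleGraph α) (σ : LinearOrder α) (γ : ℕ) (hγ : 1 ≤ γ)
    (𝒱 : Set (Finset α))
    (hsize : ∀ V ∈ 𝒱, V.card ≤ γ)
    (hconn : ∀ V ∈ 𝒱, (G.induce (↑V : Set α)).Connected)
    (w t : ℝ) (hw : (wcol G σ γ : ℝ) ≤ w) (ht : 0 < t)
    (r : ℕ) (hr : (1 + 1 / t) * w ≤ (r : ℝ))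
    (𝒰 : Set (Finset α)) (h𝒰 : 𝒰 ⊆ 𝒱)
    (S : Finset α) (hS : ∀ V ∈ 𝒰, (S ∩ V).Nonempty) :
    ∃ S' : Finset α, S ⊆ S' ∧ ((S'.card : ℝ) ≤ (1 + t) * (S.card : ℝ)) ∧
      ∀ X : Finset α, X.Nonempty → IsSunflowerWithCore 𝒰 r X →
        (S' ∩ X).Nonempty :=
  stmt6_general G σ γ (wcol G σ γ) (encard_WR_le_wcol G σ γ) t ht r
    ((mul_le_mul_of_nonneg_left hw (by positivity)).trans hr) 𝒰 (fun V hV ↦ hsize V (h𝒰 hV))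
    (fun V hV ↦ (hconn V (h𝒰 hV)).preconnected) S hS
end

section
/- Let γ ≥ 2 and δ ≥ 1 be integers and let 𝒱 be a collection of subsets of a finite set U, each of size at most γ. Let Γ be the collection of all nonempty sets X ⊆ U that are the core of a (δ·γ^{|X|})-sunflower in 𝒱, and let Γ* be the collection of inclusion-minimal members of Γ. Then every element u ∈ U is contained in at most (δ·γ^γ)^γ·γ! members of Γ*. -/
/-- `Γ`: the collection of all nonempty sets `X` that are the core of a
`(δ·γ^{|X|})`-sunflower in `𝒱`. -/
def GammaColl {α : Type} [DecidableEq α] (𝒱 : Set (Finset α)) (γ δ : ℕ) :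
    Set (Finset α) :=
  {X | X.Nonempty ∧ IsSunflowerWithCore 𝒱 (δ * γ ^ X.card) X}

/-- `Γ*`: the inclusion-minimal members of `Γ`. -/
def GammaMin {α : Type} [DecidableEq α] (𝒱 : Set (Finset α)) (γ δ : ℕ) :
    Set (Finset α) :=
  {X ∈ GammaColl 𝒱 γ δ | ∀ Y ∈ GammaColl 𝒱 γ δ, Y ⊆ X → Y = X}

/-!
If the bound fails, the Erdős–Rado sunflower lemma yields a sunflower `S` with `δ·γ^γ` members, all
of them members of `Γ*` containing `u`. Its core `X` contains `u` and, `Γ*` being an antichain, is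
strictly contained in every member of `S`. Each member of `S` is itself the core of a large
sunflower in `𝒱`; choosing petals from these greedily, each time a petal that meets the previous
choices only inside `X`, gives a `(δ·γ^|X|)`-sunflower in `𝒱` with core `X`. So `X ∈ Γ`,
contradicting the minimality of the members of `S`.
-/

open Finset
open scoped Nat

section Sunflower

variable {α : Type*} [DecidableEq α]

/-- The finite family `S` is a sunflower with core `X`. As in `IsSunflowerWithCore`, the core is
determined by the pairwise intersections only, so a family with at most one member is a sunflower
with every core. -/
def IsSunflower (S : Finset (Finset α)) (X : Finset α) : Prop :=
  (S : Set (Finset α)).Pairwise fun A B ↦ A ∩ B = X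

namespace IsSunflower

variable {S : Finset (Finset α)} {A X : Finset α}

theorem core_subset (hS : IsSunflower S X) (hnt : S.Nontrivial) (hA : A ∈ S) : X ⊆ A := by
  obtain ⟨B, hB, hBA⟩ := hnt.exists_ne A
  exact hS hA hB hBA.symm ▸ inter_subset_left

theorem core_ssubset (hS : IsSunflower S X) (hnt : S.Nontrivial)
    (hanti : IsAntichain (· ⊆ ·) (S : Set (Finset α))) (hA : A ∈ S) : X ⊂ A := by
  refine (hS.core_subset hnt hA).ssubset_of_ne ?_
  rintro rfl
  obtain ⟨B, hB, hBX⟩ := hnt.exists_ne X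
  exact hanti hA hB hBX.symm (hS.core_subset hnt hB)

theorem mem_core {a : α} (hS : IsSunflower S X) (hnt : S.Nontrivial) (ha : ∀ A ∈ S, a ∈ A) :
    a ∈ X := by
  obtain ⟨A, hA, B, hB, hAB⟩ := hnt
  exact hS hA hB hAB ▸ mem_inter.2 ⟨ha A hA, ha B hB⟩

theorem insert (hS : IsSunflower S X) (hA : ∀ B ∈ S, A ∩ B = X) : IsSunflower (insert A S) X := by
  have : Std.Symm fun A B : Finset α ↦ A ∩ B = X := ⟨fun A B h ↦ inter_comm A B ▸ h⟩
  rw [IsSunflower, coe_insert, Set.pairwise_insert_of_symm]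
  exact ⟨hS, fun B hB _ ↦ hA B hB⟩

theorem image_insert (hS : IsSunflower S X) (a : α) :
    IsSunflower (S.image (Insert.insert a)) (Insert.insert a X) := by
  rw [IsSunflower, coe_image]
  rintro _ ⟨A, hA, rfl⟩ _ ⟨B, hB, rfl⟩ hAB
  rw [← insert_inter_distrib, hS hA hB (ne_of_apply_ne _ hAB)]

-- The sets `(A ∩ W) \ X` are pairwise disjoint subsets of `W`, so they cannot all be nonempty.
theorem exists_mem_inter_subset {W : Finset α} (hS : IsSunflower S X) (hW : #W < #S) :
    ∃ A ∈ S, A ∩ W ⊆ X := by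
  by_contra! hmeet
  have hdisj : (S : Set (Finset α)).PairwiseDisjoint fun A ↦ (A ∩ W) \ X := by
    intro A hA B hB hAB
    have := hS hA hB hAB
    grind [disjoint_left]
  have hcard : #S ≤ #(S.biUnion fun A ↦ (A ∩ W) \ X) :=
    card_le_card_biUnion hdisj fun A hA ↦ sdiff_nonempty.2 (hmeet A hA)
  have hsub : (S.biUnion fun A ↦ (A ∩ W) \ X) ⊆ W :=
    biUnion_subset.2 fun A _ ↦ sdiff_subset.trans inter_subset_right
  exact (hcard.trans (card_le_card hsub)).not_gt hW

end IsSunflower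

theorem exists_isSunflower_of_forall_exists_inter_subset {𝒱 : Set (Finset α)} {X : Finset α}
    {k r : ℕ} (hcore : ∀ V ∈ 𝒱, X ⊂ V) (hsize : ∀ V ∈ 𝒱, #V ≤ k)
    (havoid : ∀ W : Finset α, #W ≤ (r - 1) * k → ∃ V ∈ 𝒱, V ∩ W ⊆ X) :
    ∃ S : Finset (Finset α), ↑S ⊆ 𝒱 ∧ #S = r ∧ IsSunflower S X := by
  induction r with
  | zero => exact ⟨∅, by simp [IsSunflower]⟩
  | succ r ih =>
    obtain ⟨S, hS𝒱, rfl, hS⟩ := ih fun W hW ↦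
      havoid W (hW.trans (Nat.mul_le_mul_right k (by lia)))
    obtain ⟨V, hV, hVS⟩ := havoid (S.biUnion id)
      (card_biUnion_le_card_mul S id k fun A hA ↦ hsize A (hS𝒱 hA))
    have hVX : ∀ A ∈ S, V ∩ A = X := fun A hA ↦
      ((inter_subset_inter_left (subset_biUnion_of_mem id hA)).trans hVS).antisymm
        (subset_inter (hcore V hV).subset (hcore A (hS𝒱 hA)).subset)
    have hVnot : V ∉ S := fun h ↦ (hcore V hV).ne' (inter_self V ▸ hVX V h)
    refine ⟨insert V S, ?_, card_insert_of_notMem hVnot, hS.insert hVX⟩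
    rw [coe_insert]
    exact Set.insert_subset hV hS𝒱

theorem exists_isSunflower_empty_or_exists_hitting {F : Finset (Finset α)} {k : ℕ}
    (hsize : ∀ A ∈ F, #A ≤ k) (r : ℕ) :
    (∃ S ⊆ F, #S = r ∧ IsSunflower S ∅) ∨
      ∃ W : Finset α, #W ≤ (r - 1) * k ∧ ∀ A ∈ F, A.Nonempty → (A ∩ W).Nonempty := by
  refine or_iff_not_imp_right.2 fun hhit ↦ ?_
  push Not at hhit
  obtain ⟨S, hSF, hSr, hS⟩ := exists_isSunflower_of_forall_exists_inter_subset
    (𝒱 := {A | A ∈ F ∧ A.Nonempty}) (X := ∅) (k := k) (r := r)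
    (fun A hA ↦ empty_ssubset.2 hA.2) (fun A hA ↦ hsize A hA.1) fun W hW ↦ by
      obtain ⟨A, hAF, hA, hAW⟩ := hhit W hW
      exact ⟨A, ⟨hAF, hA⟩, hAW.subset⟩
  exact ⟨S, fun A hA ↦ (hSF hA).1, hSr, hS⟩

theorem card_le_card_hitting_mul_add_one {F : Finset (Finset α)} {W : Finset α} {M : ℕ}
    (hhit : ∀ A ∈ F, A.Nonempty → (A ∩ W).Nonempty)
    (hM : ∀ x ∈ W, #(F.memberSubfamily x) ≤ M) : #F ≤ #W * M + 1 := by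
  have hcover : F ⊆ insert ∅ (W.biUnion fun x ↦ (F.memberSubfamily x).image (insert x)) := by
    intro A hA
    obtain rfl | hne := A.eq_empty_or_nonempty
    · exact mem_insert_self _ _
    · obtain ⟨x, hx⟩ := hhit A hA hne
      rw [mem_inter] at hx
      refine mem_insert_of_mem (mem_biUnion.2 ⟨x, hx.2, ?_⟩)
      rw [image_insert_memberSubfamily]
      exact mem_filter.2 ⟨hA, hx.1⟩
  calc #F ≤ #(W.biUnion fun x ↦ (F.memberSubfamily x).image (insert x)) + 1 :=
        (card_le_card hcover).trans (card_insert_le _ _)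
    _ ≤ #W * M + 1 := by
        gcongr
        exact card_biUnion_le_card_mul _ _ _ fun x hx ↦ card_image_le.trans (hM x hx)

theorem exists_isSunflower_of_memberSubfamily {F S : Finset (Finset α)} {X : Finset α} {x : α}
    (hSF : S ⊆ F.memberSubfamily x) (hS : IsSunflower S X) :
    ∃ T ⊆ F, #T = #S ∧ IsSunflower T (insert x X) := by
  refine ⟨S.image (insert x), ?_, ?_, hS.image_insert x⟩
  · exact image_subset_iff.2 fun A hA ↦ (mem_memberSubfamily.1 (hSF hA)).1
  · have hx : ∀ A ∈ S, x ∉ A := fun A hA ↦ (mem_memberSubfamily.1 (hSF hA)).2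
    refine card_image_of_injOn fun A hA B hB hAB ↦ ?_
    rw [← erase_insert (hx A hA), hAB, erase_insert (hx B hB)]

theorem exists_isSunflower_of_lt_card {r k : ℕ} {F : Finset (Finset α)}
    (hsize : ∀ A ∈ F, #A ≤ k) (hF : r ^ k * k ! < #F) :
    ∃ S ⊆ F, #S = r ∧ ∃ X, IsSunflower S X := by
  obtain rfl | hr := r.eq_zero_or_pos
  · exact ⟨∅, by simp [IsSunflower]⟩
  induction k generalizing F with
  | zero =>
    have : F ⊆ {∅} := fun A hA ↦ by simpa using hsize A hA
    exact absurd hF (by simpa using card_le_card this)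
  | succ k ih =>
    obtain ⟨S, hSF, hSr, hS⟩ | ⟨W, hWcard, hW⟩ :=
      exists_isSunflower_empty_or_exists_hitting hsize r
    · exact ⟨S, hSF, hSr, ∅, hS⟩
    obtain ⟨x, -, hx⟩ : ∃ x ∈ W, r ^ k * k ! < #(F.memberSubfamily x) := by
      by_contra! hsmall
      refine hF.not_ge ?_
      calc #F ≤ #W * (r ^ k * k !) + 1 := card_le_card_hitting_mul_add_one hW hsmall
        _ ≤ (r - 1) * (k + 1) * (r ^ k * k !) + (k + 1) * (r ^ k * k !) := by
            gcongr
            exact Nat.succ_le_of_lt (by positivity)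
        _ = r ^ (k + 1) * (k + 1)! := by
            obtain ⟨s, rfl⟩ := Nat.exists_eq_add_of_lt hr
            simp only [Nat.factorial_succ, zero_add, Nat.add_sub_cancel]
            ring
    obtain ⟨S, hSF, rfl, X, hS⟩ := ih (F := F.memberSubfamily x) (fun A hA ↦ by
      obtain ⟨hAF, hxA⟩ := mem_memberSubfamily.1 hA
      have := hsize _ hAF
      rwa [card_insert_of_notMem hxA, Nat.add_le_add_iff_right] at this) hx
    obtain ⟨T, hTF, hTS, hT⟩ := exists_isSunflower_of_memberSubfamily hSF hS
    exact ⟨T, hTF, hTS, _, hT⟩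

theorem exists_isSunflower_of_lt_encard {r k : ℕ} {𝒱 : Set (Finset α)}
    (hsize : ∀ A ∈ 𝒱, #A ≤ k) (h𝒱 : (r ^ k * k ! : ℕ) < 𝒱.encard) :
    ∃ S : Finset (Finset α), ↑S ⊆ 𝒱 ∧ #S = r ∧ ∃ X, IsSunflower S X := by
  obtain ⟨F, hF𝒱, hFcard⟩ := Set.exists_subset_encard_eq (Order.add_one_le_of_lt h𝒱)
  lift F to Finset (Finset α) using Set.finite_of_encard_eq_coe hFcard
  have hF : #F = r ^ k * k ! + 1 := by
    rw [Set.encard_coe_eq_coe_finsetCard] at hFcard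
    exact_mod_cast hFcard
  obtain ⟨S, hSF, hS⟩ :=
    exists_isSunflower_of_lt_card (r := r) (fun A hA ↦ hsize A (hF𝒱 hA)) (by lia)
  exact ⟨S, (coe_subset.2 hSF).trans hF𝒱, hS⟩

end Sunflower

section GammaColl

variable {α : Type} [DecidableEq α] {𝒱 : Set (Finset α)} {γ δ : ℕ} {X : Finset α}

theorem isSunflowerWithCore_iff {r : ℕ} :
    IsSunflowerWithCore 𝒱 r X ↔
      ∃ S : Finset (Finset α), ↑S ⊆ 𝒱 ∧ #S = r ∧ IsSunflower S X :=
  Iff.rfl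

theorem isAntichain_gammaMin : IsAntichain (· ⊆ ·) (GammaMin 𝒱 γ δ) :=
  fun X hX _ hY hne hXY ↦ hne (hY.2 X hX.1 hXY)

theorem one_lt_mul_pow (hγ : 2 ≤ γ) (hδ : 1 ≤ δ) {n : ℕ} (hn : n ≠ 0) : 1 < δ * γ ^ n :=
  (Nat.one_lt_pow hn hγ).trans_le (Nat.le_mul_of_pos_left _ hδ)

theorem exists_superset_inter_subset_of_mem_gammaColl (hγ : 2 ≤ γ) (hδ : 1 ≤ δ)
    (hX : X ∈ GammaColl 𝒱 γ δ) {W : Finset α} (hW : #W < δ * γ ^ #X) :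
    ∃ V ∈ 𝒱, X ⊆ V ∧ V ∩ W ⊆ X := by
  obtain ⟨hne, hcore⟩ := hX
  obtain ⟨S, hS𝒱, hScard, hS⟩ := isSunflowerWithCore_iff.1 hcore
  have hnt : S.Nontrivial :=
    one_lt_card_iff_nontrivial.1 (hScard ▸ one_lt_mul_pow hγ hδ hne.card_ne_zero)
  obtain ⟨V, hV, hVW⟩ := hS.exists_mem_inter_subset (hScard ▸ hW)
  exact ⟨V, hS𝒱 hV, hS.core_subset hnt hV, hVW⟩

theorem card_le_of_mem_gammaColl (hγ : 2 ≤ γ) (hδ : 1 ≤ δ) (hsize : ∀ V ∈ 𝒱, #V ≤ γ)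
    (hX : X ∈ GammaColl 𝒱 γ δ) : #X ≤ γ := by
  obtain ⟨V, hV, hXV, -⟩ :=
    exists_superset_inter_subset_of_mem_gammaColl hγ hδ hX (W := ∅)
      (one_pos.trans (one_lt_mul_pow hγ hδ hX.1.card_ne_zero))
  exact (card_le_card hXV).trans (hsize V hV)

theorem mem_gammaColl_of_isSunflower (hγ : 2 ≤ γ) (hδ : 1 ≤ δ) (hsize : ∀ V ∈ 𝒱, #V ≤ γ)
    {S : Finset (Finset α)} (hSΓ : ↑S ⊆ GammaColl 𝒱 γ δ) (hS : IsSunflower S X)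
    (hXS : ∀ Y ∈ S, X ⊂ Y) (hX : X.Nonempty) (hcard : δ * γ ^ (#X + 1) ≤ #S) :
    X ∈ GammaColl 𝒱 γ δ := by
  obtain ⟨T, hT𝒱, hT⟩ := exists_isSunflower_of_forall_exists_inter_subset
    (𝒱 := {V ∈ 𝒱 | X ⊂ V}) (X := X) (k := γ) (r := δ * γ ^ #X)
    (fun V hV ↦ hV.2) (fun V hV ↦ hsize V hV.1) fun W hW ↦ by
      have hW : #W < δ * γ ^ (#X + 1) := by
        refine hW.trans_lt ?_
        rw [pow_succ, ← mul_assoc]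
        gcongr
        exact Nat.sub_one_lt (by positivity)
      obtain ⟨Y, hY, hYW⟩ := hS.exists_mem_inter_subset (hW.trans_le hcard)
      have hXY : X ⊂ Y := hXS Y hY
      obtain ⟨V, hV, hYV, hVW⟩ := exists_superset_inter_subset_of_mem_gammaColl hγ hδ (hSΓ hY)
        (hW.trans_le (by gcongr; exacts [by lia, card_lt_card hXY]))
      refine ⟨V, ⟨hV, hXY.trans_subset hYV⟩, ?_⟩
      exact (subset_inter hVW inter_subset_right).trans hYW
  exact ⟨hX, isSunflowerWithCore_iff.2 ⟨T, fun V hV ↦ (hT𝒱 hV).1, hT⟩⟩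

theorem stmt10_general (hγ : 2 ≤ γ) (hδ : 1 ≤ δ) (hsize : ∀ V ∈ 𝒱, #V ≤ γ) (u : α) :
    {X ∈ GammaMin 𝒱 γ δ | u ∈ X}.encard ≤ ((δ * γ ^ γ) ^ γ * γ ! : ℕ) := by
  by_contra! hlt
  obtain ⟨S, hSmin, hScard, X, hS⟩ := exists_isSunflower_of_lt_encard
    (fun Y hY ↦ card_le_of_mem_gammaColl hγ hδ hsize hY.1.1) hlt
  have hSΓ : ↑S ⊆ GammaColl 𝒱 γ δ := fun Y hY ↦ (hSmin hY).1.1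
  have hnt : S.Nontrivial :=
    one_lt_card_iff_nontrivial.1 (hScard ▸ one_lt_mul_pow hγ hδ (by lia))
  have hXS : ∀ Y ∈ S, X ⊂ Y := fun Y hY ↦
    hS.core_ssubset hnt (isAntichain_gammaMin.subset fun Z hZ ↦ (hSmin hZ).1) hY
  have huX : u ∈ X := hS.mem_core hnt fun Y hY ↦ (hSmin hY).2
  obtain ⟨Y, hY⟩ := hnt.nonempty
  have hXγ : #X < γ :=
    (card_lt_card (hXS Y hY)).trans_le (card_le_of_mem_gammaColl hγ hδ hsize (hSΓ hY))
  have hXΓ : X ∈ GammaColl 𝒱 γ δ :=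
    mem_gammaColl_of_isSunflower hγ hδ hsize hSΓ hS hXS ⟨u, huX⟩
      (hScard ▸ by gcongr; exacts [by lia, hXγ])
  exact (hXS Y hY).ne ((hSmin hY).1.2 X hXΓ (hXS Y hY).subset)

end GammaColl

/-- let `γ ≥ 2`, `δ ≥ 1`, and let `𝒱` consist of sets of size at
most `γ`.  Then every element `u` is contained in at most `(δ·γ^γ)^γ·γ!`
members of `Γ*`. -/
theorem stmt10 {α : Type} [Fintype α] [DecidableEq α]
    (γ δ : ℕ) (hγ : 2 ≤ γ) (hδ : 1 ≤ δ)
    (𝒱 : Set (Finset α)) (hsize : ∀ V ∈ 𝒱, V.card ≤ γ) (u : α) :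
    ({X ∈ GammaMin 𝒱 γ δ | u ∈ X}).ncard ≤ (δ * γ ^ γ) ^ γ * Nat.factorial γ :=
  (Set.encard_le_coe_iff_finite_ncard_le.1 (stmt10_general hγ hδ hsize u)).2
end

section
/- Let γ ≥ 2 and δ ≥ 1 be integers and let 𝒱 be a collection of subsets of a finite set U, each of size at most γ. Let Γ be the collection of all nonempty sets X ⊆ U that are the core of a (δ·γ^{|X|})-sunflower in 𝒱. If some k distinct members of Γ form a k-sunflower with nonempty core X, where k ≥ δ·γ^γ, then X ∈ Γ. -/
/-!
Call `A \ X` the petal of a member `A` of a sunflower with core `X`. Petals are disjoint, so a set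
`W` with fewer points than the sunflower has members misses some petal. Suppose now that `X` is the
core of a large sunflower of sets `C`, each of which is itself the core of a large sunflower in `𝒱`.
Build a sunflower in `𝒱` with core `X` greedily: the union `W` of the members chosen so far is
small, so some petal `C \ X` misses `W`, and then some petal `V \ C` of the sunflower around `C`
misses `W`; hence `V ∩ W ⊆ X` and `V` can be added.
-/

section Petals

variable {α : Type*} [DecidableEq α] {𝒮 : Finset (Finset α)} {X V W : Finset α}

theorem exists_mem_inter_subset_of_card_lt (h : ∀ A ∈ 𝒮, ∀ B ∈ 𝒮, A ≠ B → A ∩ B = X)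
    (hW : W.card < 𝒮.card) : ∃ A ∈ 𝒮, A ∩ W ⊆ X := by
  by_contra! hmeet
  have hdisj : (𝒮 : Set (Finset α)).PairwiseDisjoint fun A ↦ (A ∩ W) \ X := by
    intro A hA B hB hne
    refine Finset.disjoint_left.2 fun x hxA hxB ↦ ?_
    simp only [Finset.mem_sdiff, Finset.mem_inter] at hxA hxB
    exact hxA.2 (h A hA B hB hne ▸ Finset.mem_inter.2 ⟨hxA.1.1, hxB.1.1⟩)
  have hsub : 𝒮.biUnion (fun A ↦ (A ∩ W) \ X) ⊆ W :=
    Finset.biUnion_subset.2 fun A _ ↦ Finset.sdiff_subset.trans Finset.inter_subset_right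
  have hcard : 𝒮.card ≤ W.card :=
    (Finset.card_le_card_biUnion hdisj fun A hA ↦ Finset.sdiff_nonempty.2 (hmeet A hA)).trans
      (Finset.card_le_card hsub)
  exact hW.not_ge hcard

theorem inter_eq_of_mem_insert
    (h : ∀ A ∈ 𝒮, ∀ B ∈ 𝒮, A ≠ B → A ∩ B = X) (hX : ∀ A ∈ 𝒮, X ⊆ A) (hXV : X ⊆ V)
    (hV : V ∩ 𝒮.biUnion id ⊆ X) :
    ∀ A ∈ insert V 𝒮, ∀ B ∈ insert V 𝒮, A ≠ B → A ∩ B = X := by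
  have hinter : ∀ B ∈ 𝒮, V ∩ B = X := fun B hB ↦
    ((Finset.inter_subset_inter_left (Finset.subset_biUnion_of_mem id hB)).trans hV).antisymm
      (Finset.subset_inter hXV (hX B hB))
  intro A hA B hB hne
  rcases Finset.mem_insert.1 hA with rfl | hA𝒮 <;> rcases Finset.mem_insert.1 hB with rfl | hB𝒮
  · exact absurd rfl hne
  · exact hinter B hB𝒮
  · rw [Finset.inter_comm, hinter A hA𝒮]
  · exact h A hA𝒮 B hB𝒮 hne

end Petals

namespace IsSunflowerWithCore

variable {α : Type} [DecidableEq α] {𝒰 𝒱 𝒞 : Set (Finset α)} {X W : Finset α} {r m γ k : ℕ}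

theorem mono (h𝒰𝒱 : 𝒰 ⊆ 𝒱) (h : IsSunflowerWithCore 𝒰 r X) : IsSunflowerWithCore 𝒱 r X := by
  obtain ⟨𝒮, h𝒮, hcard, hinter⟩ := h
  exact ⟨𝒮, h𝒮.trans h𝒰𝒱, hcard, hinter⟩

theorem exists_superset_inter_subset (h : IsSunflowerWithCore 𝒰 r X) (hr : 1 < r)
    (hW : W.card < r) : ∃ A ∈ 𝒰, X ⊆ A ∧ A ∩ W ⊆ X := by
  obtain ⟨𝒮, h𝒮, rfl, hinter⟩ := h
  obtain ⟨A, hA, hAW⟩ := exists_mem_inter_subset_of_card_lt hinter hW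
  obtain ⟨B, hB, hBA⟩ := Finset.exists_mem_ne hr A
  exact ⟨A, h𝒮 hA, hinter A hA B hB hBA.symm ▸ Finset.inter_subset_left, hAW⟩

theorem exists_superset (h : IsSunflowerWithCore 𝒰 r X) (hr : 1 < r) : ∃ A ∈ 𝒰, X ⊆ A := by
  obtain ⟨A, hA, hXA, -⟩ := h.exists_superset_inter_subset (W := ∅) hr (Nat.zero_lt_of_lt hr)
  exact ⟨A, hA, hXA⟩

theorem of_forall_exists_inter_biUnion_subset (hX : ∀ V ∈ 𝒱, X ⊂ V)
    (hext : ∀ 𝒮 : Finset (Finset α), ↑𝒮 ⊆ 𝒱 → 𝒮.card < m → ∃ V ∈ 𝒱, V ∩ 𝒮.biUnion id ⊆ X) :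
    IsSunflowerWithCore 𝒱 m X := by
  induction m with
  | zero => exact ⟨∅, by simp⟩
  | succ m ih =>
    obtain ⟨𝒮, h𝒮, rfl, hinter⟩ := ih fun 𝒮 h𝒮 hlt ↦ hext 𝒮 h𝒮 (hlt.trans m.lt_succ_self)
    obtain ⟨V, hV, hVX⟩ := hext 𝒮 h𝒮 (Nat.lt_succ_self _)
    have hVnotMem : V ∉ 𝒮 := fun hmem ↦
      (hX V hV).not_subset <|
        (Finset.subset_inter subset_rfl (Finset.subset_biUnion_of_mem id hmem)).trans hVX
    refine ⟨insert V 𝒮, ?_, Finset.card_insert_of_notMem hVnotMem, ?_⟩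
    · rw [Finset.coe_insert]
      exact Set.insert_subset hV h𝒮
    · exact inter_eq_of_mem_insert hinter (fun A hA ↦ (hX A (h𝒮 hA)).subset)
        (hX V hV).subset hVX

theorem of_forall_mem_isSunflowerWithCore (hsize : ∀ V ∈ 𝒱, V.card ≤ γ) (hm : 1 < m * γ)
    (h : IsSunflowerWithCore 𝒞 k X) (hk : m * γ ≤ k) (hX : X ∉ 𝒞)
    (hcore : ∀ C ∈ 𝒞, X ⊂ C → ∃ r, m * γ ≤ r ∧ IsSunflowerWithCore 𝒱 r C) :
    IsSunflowerWithCore 𝒱 m X := by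
  refine mono (Set.sep_subset 𝒱 (X ⊂ ·)) <|
    of_forall_exists_inter_biUnion_subset (fun V hV ↦ hV.2) fun 𝒮 h𝒮 hlt ↦ ?_
  have hW : (𝒮.biUnion id).card < m * γ :=
    (Finset.card_biUnion_le_card_mul 𝒮 id γ fun V hV ↦ hsize V (h𝒮 hV).1).trans_lt
      (Nat.mul_lt_mul_of_pos_right hlt (Nat.pos_of_lt_mul_left hm))
  obtain ⟨C, hC, hXC, hCW⟩ := h.exists_superset_inter_subset (hm.trans_le hk) (hW.trans_le hk)
  have hXC : X ⊂ C := hXC.ssubset_of_ne fun heq ↦ hX (heq ▸ hC)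
  obtain ⟨r, hr, hsun⟩ := hcore C hC hXC
  obtain ⟨V, hV, hCV, hVW⟩ := hsun.exists_superset_inter_subset (hm.trans_le hr) (hW.trans_le hr)
  exact ⟨V, ⟨hV, hXC.trans_subset hCV⟩,
    (Finset.subset_inter hVW Finset.inter_subset_right).trans hCW⟩

end IsSunflowerWithCore

namespace GammaColl

variable {α : Type} [DecidableEq α] {𝒱 : Set (Finset α)} {γ δ k : ℕ} {X : Finset α}

theorem card_le_of_mem (hγ : 2 ≤ γ) (hδ : 1 ≤ δ) (hsize : ∀ V ∈ 𝒱, V.card ≤ γ)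
    (hX : X ∈ GammaColl 𝒱 γ δ) : X.card ≤ γ := by
  obtain ⟨hne, hsun⟩ := hX
  have hr : 1 < δ * γ ^ X.card := one_lt_mul_of_le_of_lt hδ (Nat.one_lt_pow hne.card_ne_zero hγ)
  obtain ⟨V, hV, hXV⟩ := hsun.exists_superset hr
  exact (Finset.card_le_card hXV).trans (hsize V hV)

theorem card_core_lt (hγ : 2 ≤ γ) (hδ : 1 ≤ δ) (hsize : ∀ V ∈ 𝒱, V.card ≤ γ) (hk : 1 < k)
    (hsun : IsSunflowerWithCore (GammaColl 𝒱 γ δ) k X) (hX : X ∉ GammaColl 𝒱 γ δ) :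
    X.card < γ := by
  obtain ⟨C, hC, hXC⟩ := hsun.exists_superset hk
  have hXC : X ⊂ C := hXC.ssubset_of_ne fun heq ↦ hX (heq ▸ hC)
  exact (Finset.card_lt_card hXC).trans_le (card_le_of_mem hγ hδ hsize hC)

theorem core_mem_of_mul_pow_card_succ_le (hγ : 2 ≤ γ) (hδ : 1 ≤ δ)
    (hsize : ∀ V ∈ 𝒱, V.card ≤ γ) (hk : δ * γ ^ (X.card + 1) ≤ k) (hne : X.Nonempty)
    (hsun : IsSunflowerWithCore (GammaColl 𝒱 γ δ) k X) : X ∈ GammaColl 𝒱 γ δ := by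
  by_contra hX
  have hpow : δ * γ ^ X.card * γ = δ * γ ^ (X.card + 1) := by rw [mul_assoc, ← pow_succ]
  have hone : 1 < δ * γ ^ X.card * γ :=
    hpow ▸ one_lt_mul_of_le_of_lt hδ (Nat.one_lt_pow X.card.succ_ne_zero hγ)
  refine hX ⟨hne, .of_forall_mem_isSunflowerWithCore hsize hone hsun (hpow ▸ hk) hX fun C hC hXC ↦
    ⟨δ * γ ^ C.card, ?_, hC.2⟩⟩
  rw [hpow]
  gcongr
  · omega
  · exact Finset.card_lt_card hXC

end GammaColl

theorem stmt11_general {α : Type} [DecidableEq α]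
    (γ δ : ℕ) (hγ : 2 ≤ γ) (hδ : 1 ≤ δ)
    (𝒱 : Set (Finset α)) (hsize : ∀ V ∈ 𝒱, V.card ≤ γ)
    (k : ℕ) (hk : δ * γ ^ γ ≤ k)
    (X : Finset α) (hX : X.Nonempty)
    (hsun : IsSunflowerWithCore (GammaColl 𝒱 γ δ) k X) :
    X ∈ GammaColl 𝒱 γ δ := by
  by_contra hnotMem
  have hk_one : 1 < k := (one_lt_mul_of_le_of_lt hδ (Nat.one_lt_pow (by omega) hγ)).trans_le hk
  have hcard : X.card < γ := GammaColl.card_core_lt hγ hδ hsize hk_one hsun hnotMem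
  have hk_card : δ * γ ^ (X.card + 1) ≤ k :=
    (Nat.mul_le_mul_left δ (Nat.pow_le_pow_right (by omega) hcard)).trans hk
  exact hnotMem (GammaColl.core_mem_of_mul_pow_card_succ_le hγ hδ hsize hk_card hX hsun)

/-- let `γ ≥ 2`, `δ ≥ 1`, and let `𝒱` consist of sets of size at
most `γ`.  If `k` distinct members of `Γ` form a `k`-sunflower with nonempty core
`X`, where `k ≥ δ·γ^γ`, then `X ∈ Γ`. -/
theorem stmt11 {α : Type} [Fintype α] [DecidableEq α]
    (γ δ : ℕ) (hγ : 2 ≤ γ) (hδ : 1 ≤ δ)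
    (𝒱 : Set (Finset α)) (hsize : ∀ V ∈ 𝒱, V.card ≤ γ)
    (k : ℕ) (hk : δ * γ ^ γ ≤ k)
    (X : Finset α) (hX : X.Nonempty)
    (hsun : IsSunflowerWithCore (GammaColl 𝒱 γ δ) k X) :
    X ∈ GammaColl 𝒱 γ δ :=
  stmt11_general γ δ hγ hδ 𝒱 hsize k hk X hX hsun
end

section
/- Let ℱ be a finite set of connected graphs, each with at most γ vertices (γ ≥ 1), and let G be a finite simple graph with n vertices and maximum degree Δ ≥ 2 such that every vertex of G lies in some subgraph of G isomorphic to a member of ℱ. Then G contains at least n/Δ^{2γ} pairwise vertex-disjoint subgraphs, each isomorphic to a member of ℱ; consequently, every set S ⊆ V(G) such that G − S contains no subgraph isomorphic to a member of ℱ satisfies |S| ≥ n/Δ^{2γ}. -/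
/-!
A maximal family of pairwise disjoint copies meets every copy. Hence every vertex `v` lies in a copy
that meets a chosen one, and since copies are connected on at most `γ` vertices, `v` is at distance
less than `2 * γ` from a base vertex of that chosen copy. Balls of that radius have fewer than
`Δ ^ (2 * γ)` vertices, so the chosen family has at least `n / Δ ^ (2 * γ)` members.
-/

/-- `f` realizes a subgraph copy of `F` in `G`: the injective map `f` carries
edges of `F` to edges of `G`. -/
def IsSubCopy {α β : Type} (G : SimpleGraph α) (F : SimpleGraph β) (f : β ↪ α) : Prop :=
  ∀ u v, F.Adj u v → G.Adj (f u) (f v)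

section Ball

variable {V : Type*} {G : SimpleGraph V}

lemma ball_add_one_subset (c : V) (r : ℕ∞) :
    G.ball c (r + 1) ⊆ insert c (⋃ w ∈ G.neighborSet c, G.ball w r) := by
  intro v hv
  rw [SimpleGraph.mem_ball, SimpleGraph.edist_comm] at hv
  obtain ⟨p, hp⟩ := SimpleGraph.exists_walk_of_edist_ne_top hv.ne_top
  rw [← hp] at hv
  cases p with
  | nil => exact Set.mem_insert _ _
  | @cons _ w _ hadj q =>
    have hq : (q.length : ℕ∞) < r := by
      rw [SimpleGraph.Walk.length_cons, Nat.cast_add_one] at hv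
      exact lt_of_add_lt_add_right hv
    refine Set.mem_insert_of_mem _ (Set.mem_biUnion hadj ?_)
    rw [SimpleGraph.mem_ball, SimpleGraph.edist_comm]
    exact q.edist_le.trans_lt hq

lemma encard_ball_le_geomSum [G.LocallyFinite] {Δ : ℕ} (hdeg : ∀ v, G.degree v ≤ Δ) (c : V)
    (r : ℕ) : (G.ball c r).encard ≤ (∑ i ∈ Finset.range r, Δ ^ i : ℕ) := by
  induction r generalizing c with
  | zero => simp
  | succ r ih =>
    have hneighbors : (⋃ w ∈ G.neighborFinset c, G.ball w r).encard ≤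
        (Δ * ∑ i ∈ Finset.range r, Δ ^ i : ℕ) :=
      calc (⋃ w ∈ G.neighborFinset c, G.ball w r).encard
          ≤ ∑ w ∈ G.neighborFinset c, (G.ball w r).encard := Finset.set_encard_biUnion_le _ _
        _ ≤ G.degree c • (∑ i ∈ Finset.range r, Δ ^ i : ℕ) :=
          Finset.sum_le_card_nsmul _ _ _ fun w _ ↦ ih w
        _ ≤ (Δ * ∑ i ∈ Finset.range r, Δ ^ i : ℕ) := by
          rw [nsmul_eq_mul]
          exact_mod_cast Nat.mul_le_mul_right _ (hdeg c)
    calc (G.ball c (r + 1 : ℕ)).encard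
        ≤ (insert c (⋃ w ∈ G.neighborFinset c, G.ball w r)).encard :=
          Set.encard_le_encard (by simpa using ball_add_one_subset c r)
      _ ≤ (⋃ w ∈ G.neighborFinset c, G.ball w r).encard + 1 := Set.encard_insert_le _ _
      _ ≤ (Δ * ∑ i ∈ Finset.range r, Δ ^ i : ℕ) + 1 := by gcongr
      _ = (∑ i ∈ Finset.range (r + 1), Δ ^ i : ℕ) := by
          rw [geom_sum_succ, Nat.cast_add_one]

lemma card_le_card_mul_pow_of_iUnion_ball_eq_univ [Fintype V] [G.LocallyFinite] {Δ : ℕ}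
    (hΔ : 2 ≤ Δ) (hdeg : ∀ v, G.degree v ≤ Δ) {T : Finset V} {r : ℕ}
    (hT : ⋃ t ∈ T, G.ball t r = Set.univ) : Fintype.card V ≤ T.card * Δ ^ r := by
  have hball (t : V) : (G.ball t r).encard ≤ (Δ ^ r : ℕ) :=
    (encard_ball_le_geomSum hdeg t r).trans <| by
      exact_mod_cast (Nat.geomSum_lt hΔ fun _ ↦ Finset.mem_range.mp).le
  have hcard : (Fintype.card V : ℕ∞) ≤ T.card • (Δ ^ r : ℕ) := by
    rw [← ENat.card_eq_coe_fintype_card, ← Set.encard_univ, ← hT]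
    exact (Finset.set_encard_biUnion_le _ _).trans
      (Finset.sum_le_card_nsmul _ _ _ fun t _ ↦ hball t)
  rw [nsmul_eq_mul] at hcard
  exact_mod_cast hcard

end Ball

section Packing

variable {κ V : Type*} {s : κ → Set V}

lemma exists_pairwiseDisjoint_forall_inter_nonempty (hs : ∀ i, (s i).Nonempty) :
    ∃ T : Set κ, T.PairwiseDisjoint s ∧ ∀ i, ∃ t ∈ T, (s i ∩ s t).Nonempty := by
  -- For a constant size function, Vitali's lemma extracts a maximal disjoint subfamily.
  obtain ⟨T, -, hdisj, hmeet⟩ := Vitali.exists_disjoint_subfamily_covering_enlargement s Set.univ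
    (fun _ ↦ 0) 2 one_lt_two (fun _ _ ↦ le_rfl) 0 (fun _ _ ↦ le_rfl) fun i _ ↦ hs i
  refine ⟨T, hdisj, fun i ↦ ?_⟩
  obtain ⟨t, ht, hit, -⟩ := hmeet i (Set.mem_univ i)
  exact ⟨t, ht, hit⟩

lemma exists_pairwiseDisjoint_iUnion_subset_iUnion_ball {G : SimpleGraph V} {c : κ → V}
    (hc : ∀ i, c i ∈ s i) {r : ℕ∞} (hs : ∀ i, ∀ x ∈ s i, ∀ y ∈ s i, G.edist x y < r) :
    ∃ T : Set κ, T.PairwiseDisjoint s ∧ ⋃ i, s i ⊆ ⋃ t ∈ T, G.ball (c t) (r + r) := by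
  obtain ⟨T, hdisj, hmeet⟩ := exists_pairwiseDisjoint_forall_inter_nonempty fun i ↦ ⟨c i, hc i⟩
  refine ⟨T, hdisj, Set.iUnion_subset fun i v hv ↦ ?_⟩
  obtain ⟨t, ht, x, hxi, hxt⟩ := hmeet i
  refine Set.mem_biUnion ht (G.mem_ball.mpr ?_)
  calc G.edist v (c t) ≤ G.edist v x + G.edist x (c t) := G.edist_triangle
    _ < r + r := ENat.add_lt_add (hs i v hv x hxi) (hs t x hxt (c t) (hc t))

lemma card_le_card_of_pairwise_disjoint_of_forall_exists_mem [Fintype κ]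
    (hs : Pairwise (Function.onFun Disjoint s)) {S : Finset V}
    (hS : ∀ i, ∃ x ∈ S, x ∈ s i) : Fintype.card κ ≤ S.card :=
  Finset.card_le_card_of_forall_subsingleton (fun i x ↦ x ∈ s i) (fun i _ ↦ hS i)
    fun _ _ _ hi _ hj ↦ by_contra fun hij ↦ Set.disjoint_left.mp (hs hij) hi.2 hj.2

end Packing

lemma edist_hom_apply_le {V W : Type*} {F : SimpleGraph V} {G : SimpleGraph W} (φ : F →g G)
    (x y : V) : G.edist (φ x) (φ y) ≤ F.edist x y :=
  le_iInf fun p ↦ (p.map φ).edist_le.trans_eq (by rw [SimpleGraph.Walk.length_map])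

lemma edist_lt_card_of_connected {V : Type*} [Fintype V] {F : SimpleGraph V} (hF : F.Connected)
    (x y : V) : F.edist x y < Fintype.card V := by
  obtain ⟨p, hp⟩ := hF.exists_isPath x y
  exact p.edist_le.trans_lt (by exact_mod_cast hp.length_lt)

lemma IsSubCopy.edist_lt_card {α β : Type} [Fintype β] {G : SimpleGraph α} {F : SimpleGraph β}
    {f : β ↪ α} (hf : IsSubCopy G F f) (hF : F.Connected) (x y : β) :
    G.edist (f x) (f y) < Fintype.card β :=
  (edist_hom_apply_le ⟨f, hf _ _⟩ x y).trans_lt (edist_lt_card_of_connected hF x y)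

lemma exists_disjoint_subCopies {ι : Type*} {β : ι → Type} [∀ i, Fintype (β i)]
    {F : ∀ i, SimpleGraph (β i)} {γ : ℕ} (hconn : ∀ i, (F i).Connected)
    (hcard : ∀ i, Fintype.card (β i) ≤ γ) {α : Type} [Fintype α] {G : SimpleGraph α}
    [G.LocallyFinite] {Δ : ℕ} (hΔ : 2 ≤ Δ) (hdeg : ∀ v, G.degree v ≤ Δ)
    (hcover : ∀ v : α, ∃ i, ∃ f : β i ↪ α, IsSubCopy G (F i) f ∧ v ∈ Set.range f) :
    ∃ (N : ℕ) (idx : Fin N → ι) (f : ∀ j, β (idx j) ↪ α),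
      Fintype.card α ≤ N * Δ ^ (2 * γ) ∧ (∀ j, IsSubCopy G (F (idx j)) (f j)) ∧
      Pairwise (Function.onFun Disjoint fun j ↦ Set.range (f j)) := by
  classical
  choose i f hf hmem using hcover
  have hsmall (v) : ∀ x ∈ Set.range (f v), ∀ y ∈ Set.range (f v), G.edist x y < γ := by
    rintro _ ⟨x, rfl⟩ _ ⟨y, rfl⟩
    exact ((hf v).edist_lt_card (hconn _) x y).trans_le (by exact_mod_cast hcard _)
  obtain ⟨T, hdisj, hballs⟩ := exists_pairwiseDisjoint_iUnion_subset_iUnion_ball hmem hsmall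
  have hcovered : ⋃ t ∈ T.toFinset, G.ball t (2 * γ : ℕ) = Set.univ := by
    refine Set.eq_univ_of_forall fun v ↦ ?_
    simpa [two_mul] using hballs (Set.mem_iUnion_of_mem v (hmem v))
  let e := T.toFinset.equivFin.symm
  refine ⟨T.toFinset.card, fun j ↦ i (e j), fun j ↦ f (e j),
    card_le_card_mul_pow_of_iUnion_ball_eq_univ hΔ hdeg hcovered, fun j ↦ hf _, fun j j' hne ↦ ?_⟩
  exact hdisj (Set.mem_toFinset.mp (e j).2) (Set.mem_toFinset.mp (e j').2)
    fun h ↦ hne (e.injective (Subtype.ext h))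

theorem stmt14_general {ι : Type*} {β : ι → Type} [∀ i, Fintype (β i)]
    (F : ∀ i, SimpleGraph (β i)) (γ : ℕ)
    (hconn : ∀ i, (F i).Connected)
    (hcard : ∀ i, Fintype.card (β i) ≤ γ)
    {α : Type} [Fintype α] (G : SimpleGraph α) [G.LocallyFinite]
    (Δ : ℕ) (hΔ : 2 ≤ Δ) (hdeg : ∀ v, G.degree v ≤ Δ)
    (hcover : ∀ v : α, ∃ i, ∃ f : β i ↪ α, IsSubCopy G (F i) f ∧ v ∈ Set.range f) :
    (∃ (N : ℕ) (idx : Fin N → ι) (f : ∀ j, β (idx j) ↪ α),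
      (Fintype.card α : ℝ) / (Δ : ℝ) ^ (2 * γ) ≤ (N : ℝ) ∧
      (∀ j, IsSubCopy G (F (idx j)) (f j)) ∧
      (∀ j j', j ≠ j' → ∀ x y, f j x ≠ f j' y)) ∧
    ∀ S : Finset α,
      (∀ i, ¬ ∃ f : β i ↪ α, (∀ x, f x ∉ S) ∧ IsSubCopy G (F i) f) →
      (Fintype.card α : ℝ) / (Δ : ℝ) ^ (2 * γ) ≤ (S.card : ℝ) := by
  obtain ⟨N, idx, f, hN, hf, hdisj⟩ := exists_disjoint_subCopies hconn hcard hΔ hdeg hcover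
  have hbound : (Fintype.card α : ℝ) / (Δ : ℝ) ^ (2 * γ) ≤ N := by
    rw [div_le_iff₀ (by positivity)]
    exact_mod_cast hN
  refine ⟨⟨N, idx, f, hbound, hf, fun j j' hne x y ↦ ?_⟩, fun S hS ↦ hbound.trans ?_⟩
  · exact Set.disjoint_iff_forall_ne.mp (hdisj hne) ⟨x, rfl⟩ ⟨y, rfl⟩
  · have hhit (j : Fin N) : ∃ v ∈ S, v ∈ Set.range (f j) := by
      by_contra! hmiss
      exact hS _ ⟨f j, fun x hx ↦ hmiss _ hx ⟨x, rfl⟩, hf j⟩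
    have hcardS := card_le_card_of_pairwise_disjoint_of_forall_exists_mem hdisj hhit
    rw [Fintype.card_fin] at hcardS
    exact_mod_cast hcardS

/-- let `ℱ` be a finite family of connected graphs, each with at
most `γ` vertices, and let `G` have `n` vertices, maximum degree at most `Δ ≥ 2`,
and every vertex of `G` lying in some subgraph copy of a member of `ℱ`.  Then `G`
contains at least `n/Δ^{2γ}` pairwise vertex-disjoint subgraph copies of members
of `ℱ`, and consequently every `S ⊆ V(G)` whose removal destroys all copies of
members of `ℱ` satisfies `|S| ≥ n/Δ^{2γ}`. -/
theorem stmt14 {ι : Type} [Fintype ι] {β : ι → Type} [∀ i, Fintype (β i)]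
    [∀ i, Nonempty (β i)]
    (F : ∀ i, SimpleGraph (β i)) (γ : ℕ) (hγ : 1 ≤ γ)
    (hconn : ∀ i, (F i).Connected)
    (hcard : ∀ i, Fintype.card (β i) ≤ γ)
    {α : Type} [Fintype α] (G : SimpleGraph α) [DecidableRel G.Adj]
    (Δ : ℕ) (hΔ : 2 ≤ Δ) (hdeg : ∀ v, G.degree v ≤ Δ)
    (hcover : ∀ v : α, ∃ i, ∃ f : β i ↪ α, IsSubCopy G (F i) f ∧ v ∈ Set.range f) :
    (∃ (N : ℕ) (idx : Fin N → ι) (f : ∀ j, β (idx j) ↪ α),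
      (Fintype.card α : ℝ) / (Δ : ℝ) ^ (2 * γ) ≤ (N : ℝ) ∧
      (∀ j, IsSubCopy G (F (idx j)) (f j)) ∧
      (∀ j j', j ≠ j' → ∀ x y, f j x ≠ f j' y)) ∧
    ∀ S : Finset α,
      (∀ i, ¬ ∃ f : β i ↪ α, (∀ x, f x ∉ S) ∧ IsSubCopy G (F i) f) →
      (Fintype.card α : ℝ) / (Δ : ℝ) ^ (2 * γ) ≤ (S.card : ℝ) := by
  exact stmt14_general F γ hconn hcard G Δ hΔ hdeg hcover
end

section
/- Let ℱ be a finite nonempty set of graphs, each with at least one and at most γ vertices, where γ ≥ 2. Let ε > 0 and let k be an integer with k ≥ (1+ε)·(γ−1)/ε. Let V₀,V₁,…,V_r be a k-clique decomposition of a finite simple graph G, and let S₀ ⊆ V₀ be a solution for Subgraph Hitting on (G[V₀],ℱ) with |S₀| ≤ (1+ε)·opt(G[V₀],ℱ). Then S = S₀ ∪ V₁ ∪ … ∪ V_r is a solution for Subgraph Hitting on (G,ℱ) and |S| ≤ (1+ε)·opt(G,ℱ). -/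
/-- `G` contains a subgraph isomorphic to `F` whose vertices all lie in the set `A`. -/
def HasSubCopyIn {α β : Type} (G : SimpleGraph α) (F : SimpleGraph β)
    (A : Set α) : Prop :=
  ∃ f : β ↪ α, (∀ x, f x ∈ A) ∧ ∀ u v, F.Adj u v → G.Adj (f u) (f v)

/-- `S` is a solution for Subgraph Hitting on `(G[A], ℱ)`: after deleting `S`
from `A`, no copy of a member of the family `F` remains inside `A`. -/
def IsSubSolutionOn {α ι : Type} {β : ι → Type} (G : SimpleGraph α)
    (F : ∀ i, SimpleGraph (β i)) (A S : Finset α) : Prop :=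
  ∀ i, ¬ HasSubCopyIn G (F i) ((↑A : Set α) \ (↑S : Set α))

/-- `opt(G[A], ℱ)`: minimum size of a solution for Subgraph Hitting on `(G[A], ℱ)`. -/
noncomputable def optSubOn {α ι : Type} {β : ι → Type} (G : SimpleGraph α)
    (F : ∀ i, SimpleGraph (β i)) (A : Finset α) : ℕ :=
  sInf {n | ∃ S : Finset α, S ⊆ A ∧ IsSubSolutionOn G F A S ∧ S.card = n}

/-! Pairwise disjoint vertex sets must be hit separately, so `opt` is superadditive over the parts
of the decomposition. A solution leaves fewer vertices of a clique `C` than the smallest member of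
the family has, since a clique contains every graph that fits into it; hence
`opt(G[C], ℱ) > |C| - γ`. The lower bound on the size of the cliques turns this into
`|C| ≤ (1 + ε) opt(G[C], ℱ)`, so taking all vertices of every clique costs at most `1 + ε` times
what any solution pays there. -/

section SubgraphHitting

open Finset

namespace HasSubCopyIn

variable {α β : Type} {G : SimpleGraph α} {F : SimpleGraph β}

theorem mono {A B : Set α} (hAB : A ⊆ B) : HasSubCopyIn G F A → HasSubCopyIn G F B :=
  fun ⟨f, hf, hadj⟩ => ⟨f, fun x => hAB (hf x), hadj⟩

theorem of_isEmpty [IsEmpty β] (A : Set α) : HasSubCopyIn G F A :=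
  ⟨Function.Embedding.ofIsEmpty, isEmptyElim, isEmptyElim⟩

theorem of_isClique [Fintype β] {C : Finset α} (hC : G.IsClique (C : Set α))
    (hcard : Fintype.card β ≤ #C) : HasSubCopyIn G F C := by
  obtain ⟨f⟩ : Nonempty (β ↪ C) :=
    Function.Embedding.nonempty_of_card_le (by rwa [Fintype.card_coe])
  refine ⟨f.trans (Function.Embedding.subtype _), fun x => (f x).2, fun u v huv => ?_⟩
  exact hC (f u).2 (f v).2 ((f.trans (Function.Embedding.subtype _)).injective.ne huv.ne)

end HasSubCopyIn

variable {α ι : Type} {β : ι → Type} {G : SimpleGraph α} {F : ∀ i, SimpleGraph (β i)}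

namespace IsSubSolutionOn

variable {A B S T : Finset α}

theorem of_sdiff_subset_sdiff (hS : IsSubSolutionOn G F A S)
    (h : (B : Set α) \ T ⊆ (A : Set α) \ S) : IsSubSolutionOn G F B T :=
  fun i hcopy => hS i (hcopy.mono h)

theorem nonempty (hS : IsSubSolutionOn G F A S) (i : ι) : Nonempty (β i) := by
  by_contra hempty
  have : IsEmpty (β i) := not_nonempty_iff.mp hempty
  exact hS i (HasSubCopyIn.of_isEmpty _)

theorem union_union [DecidableEq α] (hS : IsSubSolutionOn G F A S) (B : Finset α) :
    IsSubSolutionOn G F (A ∪ B) (S ∪ B) :=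
  hS.of_sdiff_subset_sdiff fun v hv => by
    simp only [coe_union, Set.mem_sdiff, Set.mem_union, mem_coe] at hv ⊢
    tauto

theorem inter_of_subset [DecidableEq α] (hS : IsSubSolutionOn G F A S) (hBA : B ⊆ A) :
    IsSubSolutionOn G F B (S ∩ B) :=
  hS.of_sdiff_subset_sdiff fun _ hv =>
    ⟨hBA hv.1, fun hvS => hv.2 (mem_coe.mpr (mem_inter.mpr ⟨hvS, hv.1⟩))⟩

theorem optSubOn_le_card_inter [DecidableEq α] (hS : IsSubSolutionOn G F A S) (hBA : B ⊆ A) :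
    optSubOn G F B ≤ #(S ∩ B) :=
  Nat.sInf_le ⟨S ∩ B, inter_subset_right, hS.inter_of_subset hBA, rfl⟩

theorem card_clique_lt_card_add (hS : IsSubSolutionOn G F A S) (hA : G.IsClique (A : Set α))
    (i : ι) [Fintype (β i)] : #A < #S + Fintype.card (β i) := by
  classical
  by_contra! hle
  refine hS i ?_
  rw [← coe_sdiff]
  refine HasSubCopyIn.of_isClique (hA.subset (coe_subset.mpr sdiff_subset)) ?_
  have := le_card_sdiff S A
  omega

end IsSubSolutionOn

theorem isSubSolutionOn_self [∀ i, Nonempty (β i)] (A : Finset α) : IsSubSolutionOn G F A A := by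
  rintro i ⟨f, hf, -⟩
  obtain ⟨x⟩ := ‹∀ i, Nonempty (β i)› i
  exact (hf x).2 (hf x).1

section Nonempty

variable [∀ i, Nonempty (β i)]

variable (G F) in
theorem exists_isSubSolutionOn_card_eq_optSubOn (A : Finset α) :
    ∃ S ⊆ A, IsSubSolutionOn G F A S ∧ #S = optSubOn G F A :=
  Nat.sInf_mem (s := {n | ∃ S ⊆ A, IsSubSolutionOn G F A S ∧ #S = n})
    ⟨#A, A, Subset.rfl, isSubSolutionOn_self A, rfl⟩

theorem optSubOn_add_le_optSubOn_union [DecidableEq α] {A B : Finset α} (hAB : Disjoint A B) :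
    optSubOn G F A + optSubOn G F B ≤ optSubOn G F (A ∪ B) := by
  obtain ⟨S, -, hS, hcard⟩ := exists_isSubSolutionOn_card_eq_optSubOn G F (A ∪ B)
  calc optSubOn G F A + optSubOn G F B
      ≤ #(S ∩ A) + #(S ∩ B) :=
        add_le_add (hS.optSubOn_le_card_inter subset_union_left)
          (hS.optSubOn_le_card_inter subset_union_right)
    _ = #(S ∩ (A ∪ B)) := by
        rw [inter_union_distrib_left,
          card_union_of_disjoint (hAB.mono inter_subset_right inter_subset_right)]
    _ ≤ optSubOn G F (A ∪ B) := hcard ▸ card_le_card inter_subset_left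

theorem sum_optSubOn_le_optSubOn_biUnion [DecidableEq α] {κ : Type*} {s : Finset κ}
    {V : κ → Finset α} (hV : (s : Set κ).PairwiseDisjoint V) :
    ∑ j ∈ s, optSubOn G F (V j) ≤ optSubOn G F (s.biUnion V) := by
  classical
  induction s using Finset.induction_on with
  | empty => simp
  | insert j s hj ih =>
    rw [coe_insert, Set.pairwiseDisjoint_insert_of_notMem (by exact_mod_cast hj)] at hV
    rw [sum_insert hj, biUnion_insert]
    calc optSubOn G F (V j) + ∑ l ∈ s, optSubOn G F (V l)
        ≤ optSubOn G F (V j) + optSubOn G F (s.biUnion V) := by gcongr; exact ih hV.1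
      _ ≤ optSubOn G F (V j ∪ s.biUnion V) :=
        optSubOn_add_le_optSubOn_union ((disjoint_biUnion_right _ _ _).mpr hV.2)

theorem card_clique_lt_optSubOn_add_card {C : Finset α} (hC : G.IsClique (C : Set α))
    (i : ι) [Fintype (β i)] : #C < optSubOn G F C + Fintype.card (β i) := by
  obtain ⟨S, -, hS, hcard⟩ := exists_isSubSolutionOn_card_eq_optSubOn G F C
  exact hcard ▸ hS.card_clique_lt_card_add hC i

theorem card_clique_le_mul_optSubOn {i : ι} [Fintype (β i)] {γ : ℕ}
    (hγ : Fintype.card (β i) ≤ γ) {ε : ℝ} (hε : 0 < ε) {C : Finset α}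
    (hC : G.IsClique (C : Set α)) (hcard : (1 + ε) * ((γ : ℝ) - 1) / ε ≤ #C) :
    (#C : ℝ) ≤ (1 + ε) * optSubOn G F C := by
  have hlt : #C + 1 ≤ optSubOn G F C + γ :=
    (card_clique_lt_optSubOn_add_card hC i).trans_le (by gcongr)
  have hsub : (#C : ℝ) + 1 - γ ≤ optSubOn G F C := by
    rw [sub_le_iff_le_add]
    exact_mod_cast hlt
  rw [div_le_iff₀ hε] at hcard
  calc (#C : ℝ) ≤ (1 + ε) * (#C + 1 - γ) := by linarith
    _ ≤ (1 + ε) * optSubOn G F C := by gcongr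

end Nonempty

theorem stmt16_general [DecidableEq α] {i : ι} [Fintype (β i)] {γ : ℕ}
    (hγ : Fintype.card (β i) ≤ γ) {ε : ℝ} (hε : 0 < ε) {κ : Type*} {s : Finset κ}
    {V₀ : Finset α} {V : κ → Finset α}
    (hdisj₀ : ∀ j ∈ s, Disjoint V₀ (V j)) (hdisj : (s : Set κ).PairwiseDisjoint V)
    (hclique : ∀ j ∈ s, G.IsClique (V j : Set α))
    (hcard : ∀ j ∈ s, (1 + ε) * ((γ : ℝ) - 1) / ε ≤ #(V j))
    {S₀ : Finset α} (hS₀ : IsSubSolutionOn G F V₀ S₀)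
    (hS₀card : (#S₀ : ℝ) ≤ (1 + ε) * optSubOn G F V₀) :
    IsSubSolutionOn G F (V₀ ∪ s.biUnion V) (S₀ ∪ s.biUnion V) ∧
      (#(S₀ ∪ s.biUnion V) : ℝ) ≤ (1 + ε) * optSubOn G F (V₀ ∪ s.biUnion V) := by
  have := hS₀.nonempty
  refine ⟨hS₀.union_union _, ?_⟩
  have hopt : optSubOn G F V₀ + ∑ j ∈ s, optSubOn G F (V j) ≤
      optSubOn G F (V₀ ∪ s.biUnion V) :=
    (Nat.add_le_add_left (sum_optSubOn_le_optSubOn_biUnion hdisj) _).trans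
      (optSubOn_add_le_optSubOn_union ((disjoint_biUnion_right _ _ _).mpr hdisj₀))
  calc (#(S₀ ∪ s.biUnion V) : ℝ)
      ≤ #S₀ + ∑ j ∈ s, (#(V j) : ℝ) := by
        exact_mod_cast (card_union_le _ _).trans (Nat.add_le_add_left card_biUnion_le _)
    _ ≤ (1 + ε) * optSubOn G F V₀ + ∑ j ∈ s, (1 + ε) * (optSubOn G F (V j) : ℝ) :=
        add_le_add hS₀card <| sum_le_sum fun j hj =>
          card_clique_le_mul_optSubOn hγ hε (hclique j hj) (hcard j hj)
    _ = (1 + ε) * ((optSubOn G F V₀ + ∑ j ∈ s, optSubOn G F (V j) : ℕ) : ℝ) := by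
        push_cast
        rw [mul_add, mul_sum]
    _ ≤ (1 + ε) * optSubOn G F (V₀ ∪ s.biUnion V) := by gcongr

end SubgraphHitting

/-- let `ℱ` be a finite nonempty family of graphs each with between
`1` and `γ` vertices (`γ ≥ 2`), let `ε > 0` and `k ≥ (1+ε)(γ−1)/ε`.  Let
`V₀, V₁, …, V_r` be a `k`-clique decomposition of `G` and let `S₀ ⊆ V₀` be a
solution for Subgraph Hitting on `(G[V₀], ℱ)` with `|S₀| ≤ (1+ε)·opt(G[V₀], ℱ)`.
Then `S = S₀ ∪ V₁ ∪ … ∪ V_r` is a solution for Subgraph Hitting on `(G, ℱ)` and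
`|S| ≤ (1+ε)·opt(G, ℱ)`. -/
theorem stmt16 {ι : Type} [Fintype ι] [Nonempty ι] {β : ι → Type}
    [∀ i, Fintype (β i)]
    (F : ∀ i, SimpleGraph (β i)) (γ : ℕ) (hγ : 2 ≤ γ)
    (hcard : ∀ i, 1 ≤ Fintype.card (β i) ∧ Fintype.card (β i) ≤ γ)
    {α : Type} [Fintype α] [DecidableEq α] (G : SimpleGraph α)
    (ε : ℝ) (hε : 0 < ε) (k : ℕ)
    (hk : (1 + ε) * ((γ : ℝ) - 1) / ε ≤ (k : ℝ))
    (r : ℕ) (V0 : Finset α) (V : Fin r → Finset α)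
    (hdisj0 : ∀ i, Disjoint V0 (V i))
    (hdisj : ∀ i j, i ≠ j → Disjoint (V i) (V j))
    (hcover : V0 ∪ Finset.univ.biUnion V = Finset.univ)
    (hV0free : ∀ T : Finset α, T ⊆ V0 → ¬ G.IsNClique k T)
    (hVclique : ∀ i, G.IsNClique k (V i))
    (S0 : Finset α) (hS0sub : S0 ⊆ V0)
    (hS0sol : IsSubSolutionOn G F V0 S0)
    (hS0apx : (S0.card : ℝ) ≤ (1 + ε) * (optSubOn G F V0 : ℝ)) :
    IsSubSolutionOn G F Finset.univ (S0 ∪ Finset.univ.biUnion V) ∧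
      (((S0 ∪ Finset.univ.biUnion V).card : ℝ) ≤
        (1 + ε) * (optSubOn G F Finset.univ : ℝ)) := by
  rw [← hcover]
  exact stmt16_general (hcard (Classical.arbitrary ι)).2 hε (fun j _ => hdisj0 j)
    (fun j _ l _ => hdisj j l) (fun j _ => (hVclique j).isClique)
    (fun j _ => (hVclique j).card_eq.symm ▸ hk) hS0sol hS0apx
end
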